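/- arXiv:0804.4611 — 7 statements merged into one kernel-verified Lean document; each statement's English description precedes it below -/
import Mathlib

section
/- Every element M of SL(3,ℤ) of finite order has a nonzero fixed vector in ℤ³, i.e. there exists v ∈ ℤ³, v ≠ 0, with M·v = v. -/
/-- Every element `M` of `SL(3,ℤ)` of finite order has a nonzero fixed vector in `ℤ³`. -/
theorem stmt1 (M : Matrix.SpecialLinearGroup (Fin 3) ℤ) (hfin : IsOfFinOrder M) :
    ∃ v : Fin 3 → ℤ, v ≠ 0 ∧ (M : Matrix (Fin 3) (Fin 3) ℤ).mulVec v = v := by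
  obtain ⟨n, hn, hM⟩ := isOfFinOrder_iff_pow_eq_one.1 hfin
  obtain ⟨A, hA⟩ : ∃ A : Matrix (Fin 3) (Fin 3) ℤ, A = M := ⟨_, rfl⟩
  have hdet : A.det = 1 := hA ▸ M.2
  have hpow : A ^ n = 1 := by
    rw [hA, ← Matrix.SpecialLinearGroup.coe_pow, hM, Matrix.SpecialLinearGroup.coe_one]
  rw [← hA]
  let f : ℕ → Matrix (Fin 3) (Fin 3) ℤ := fun i => (A ^ i).transpose * A ^ i
  let S := ∑ i ∈ Finset.range n, f i
  have hS : A.transpose * S * A = S := by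
    have h1 : A.transpose * S * A = ∑ i ∈ Finset.range n, f (i + 1) := by
      simp only [S, Finset.mul_sum, Finset.sum_mul]
      refine Finset.sum_congr rfl fun i _ => ?_
      simp only [f, pow_succ, Matrix.transpose_mul, Matrix.mul_assoc]
    have h2 := Finset.sum_range_succ f n
    rw [Finset.sum_range_succ'] at h2
    have h3 : f n = f 0 := by simp only [f, hpow, pow_zero]
    rw [h3] at h2
    rw [h1]
    exact add_right_cancel h2
  have hSdet : S.det ≠ 0 := by
    intro h
    obtain ⟨v, hv, hv0⟩ := Matrix.exists_mulVec_eq_zero_iff.2 h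
    apply hv
    have h1 : v ⬝ᵥ S.mulVec v = ∑ i ∈ Finset.range n, (A ^ i).mulVec v ⬝ᵥ (A ^ i).mulVec v := by
      simp only [S, Matrix.sum_mulVec, dotProduct_sum]
      refine Finset.sum_congr rfl fun i _ => ?_
      simp only [f]
      rw [← Matrix.mulVec_mulVec, Matrix.dotProduct_mulVec, Matrix.vecMul_transpose]
    rw [hv0, dotProduct_zero] at h1
    have h2 := (Finset.sum_eq_zero_iff_of_nonneg (fun i _ => by
      exact Finset.sum_nonneg fun j _ => mul_self_nonneg _)).1 h1.symm 0 (Finset.mem_range.2 hn)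
    simpa using h2
  have key : A.transpose * S * (A - 1) = -((A - 1).transpose * S) := by
    rw [Matrix.mul_sub, hS]
    simp [Matrix.sub_mul]
  have hd := congrArg Matrix.det key
  rw [Matrix.det_neg, Matrix.det_mul, Matrix.det_mul, Matrix.det_mul, Matrix.det_transpose,
    Matrix.det_transpose, hdet] at hd
  have h0 : (A - 1).det = 0 := by
    have : S.det * (A - 1).det = 0 := by
      simp only [Fintype.card_fin] at hd
      linarith
    exact (mul_eq_zero.1 this).resolve_left hSdet
  obtain ⟨v, hv, hv0⟩ := Matrix.exists_mulVec_eq_zero_iff.2 h0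
  refine ⟨v, hv, ?_⟩
  rw [Matrix.sub_mulVec, Matrix.one_mulVec] at hv0
  exact sub_eq_zero.1 hv0
end

section
/- Every nontrivial finite subgroup of SL(3,ℤ) is isomorphic to one of the following groups: the cyclic groups ℤ/2, ℤ/3, ℤ/4, ℤ/6; the dihedral groups D₄, D₆, D₈, D₁₂ of orders 4, 6, 8, 12 respectively; the alternating group A₄; or the symmetric group S₄. -/
open Polynomial

lemma eig_num (a b c : ℂ) (t : ℤ) (ha : ‖a‖ = 1) (hb : ‖b‖ = 1) (hc : ‖c‖ = 1)
    (hp : a * b * c = 1) (hs : a + b + c = t) :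
    a * b + b * c + c * a = t ∧ -1 ≤ t ∧ t ≤ 3 := by
  have ha' := Complex.mul_conj a
  have hb' := Complex.mul_conj b
  have hc' := Complex.mul_conj c
  rw [Complex.normSq_eq_norm_sq, ha] at ha'
  rw [Complex.normSq_eq_norm_sq, hb] at hb'
  rw [Complex.normSq_eq_norm_sq, hc] at hc'
  have hs' := congrArg (starRingEnd ℂ) hs
  simp only [map_add, map_intCast] at hs'
  generalize (starRingEnd ℂ) a = a' at *
  generalize (starRingEnd ℂ) b = b' at *
  generalize (starRingEnd ℂ) c = c' at *
  norm_num at ha' hb' hc'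
  have h2 : a * b + b * c + c * a = t := by
    have : a * b + b * c + c * a = (a * b * c) * (a' + b' + c') := by
      linear_combination (-(b*c)) * ha' - (a*c) * hb' - (a*b) * hc'
    rw [this, hp, hs', one_mul]
  refine ⟨h2, ?_⟩
  have key : ∀ x y z : ℂ, ‖y‖ = 1 → ‖z‖ = 1 → x = 1 → x + y + z = t → -1 ≤ t ∧ t ≤ 3 := by
    intro x y z hy hz hx h
    have h3 : ((t - 1 : ℤ) : ℂ) = y + z := by
      push_cast; rw [← h, hx]; ring
    have h4 : ‖((t - 1 : ℤ) : ℂ)‖ ≤ 2 := by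
      rw [h3]; refine (norm_add_le _ _).trans ?_; rw [hy, hz]; norm_num
    rw [Complex.norm_intCast] at h4
    have h5 : |t - 1| ≤ 2 := by exact_mod_cast h4
    rw [abs_le] at h5
    constructor <;> linarith [h5.1, h5.2]
  have h1 : (a - 1) * ((b - 1) * (c - 1)) = 0 := by
    linear_combination hp - h2 + hs
  rcases mul_eq_zero.1 h1 with h | h
  · exact key a b c hb hc (sub_eq_zero.1 h) hs
  rcases mul_eq_zero.1 h with h | h
  · exact key b a c ha hc (sub_eq_zero.1 h) (by rw [← hs]; ring)
  · exact key c a b ha hb (sub_eq_zero.1 h) (by rw [← hs]; ring)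

lemma elt_cubic (A : Matrix (Fin 3) (Fin 3) ℤ) (n : ℕ) (hn : 0 < n) (hA : A ^ n = 1)
    (hd : A.det = 1) :
    A ^ 3 - A.trace • A ^ 2 + A.trace • A - 1 = 0 ∧ -1 ≤ A.trace ∧ A.trace ≤ 3 := by
  set M : Matrix (Fin 3) (Fin 3) ℂ := (Int.castRingHom ℂ).mapMatrix A with hM
  have hMn : M ^ n = 1 := by rw [hM, ← map_pow, hA, map_one]
  have hMt : M.trace = (A.trace : ℂ) := by
    rw [hM]; simp [Matrix.trace]
  have hMd : M.det = 1 := by rw [hM, ← RingHom.map_det, hd, map_one]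
  have hroot : ∀ μ ∈ M.charpoly.roots, ‖μ‖ = 1 := by
    intro μ hμ
    have h1 : μ ∈ spectrum ℂ M := by
      apply Matrix.mem_spectrum_of_isRoot_charpoly
      exact (Polynomial.mem_roots'.1 hμ).2
    have h2 := spectrum.pow_mem_pow M n h1
    rw [hMn, spectrum.one_eq] at h2
    exact Complex.norm_eq_one_of_pow_eq_one (by simpa using h2) hn.ne'
  have hsp := IsAlgClosed.splits M.charpoly
  have hcard : M.charpoly.roots.card = 3 := by
    rw [← hsp.natDegree_eq_card_roots, Matrix.charpoly_natDegree_eq_dim]; rfl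
  obtain ⟨a, b, c, habc⟩ := Multiset.card_eq_three.1 hcard
  have htr := Matrix.trace_eq_sum_roots_charpoly M
  have hdt := Matrix.det_eq_prod_roots_charpoly M
  have hpoly := hsp.eq_prod_roots_of_monic (Matrix.charpoly_monic M)
  rw [habc] at htr hdt hpoly hroot
  simp at htr hdt hpoly hroot
  obtain ⟨ha, hb, hc⟩ := hroot
  obtain ⟨h2, h3⟩ := eig_num a b c A.trace ha hb hc (by rw [← hMd, hdt]; ring)
    (by rw [← hMt, htr]; ring)
  refine ⟨?_, h3⟩
  have hch : A.charpoly = X ^ 3 - C A.trace * X ^ 2 + C A.trace * X - 1 := by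
    apply Polynomial.map_injective (Int.castRingHom ℂ) Int.cast_injective
    have : M.charpoly = A.charpoly.map (Int.castRingHom ℂ) := by
      rw [hM]; exact Matrix.charpoly_map _ _
    rw [← this, hpoly]
    have e1 : (a * b * c) = 1 := by rw [← hMd, hdt]; ring
    have e2 : a + b + c = (A.trace : ℂ) := by rw [← hMt, htr]; ring
    simp only [Polynomial.map_sub, Polynomial.map_add, Polynomial.map_mul, Polynomial.map_pow,
      map_X, map_C, Polynomial.map_one]
    have e0 : (Int.castRingHom ℂ) A.trace = (A.trace : ℂ) := rfl
    rw [e0]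
    have e2' := congrArg C e2
    have e1' := congrArg C e1
    have e3' := congrArg C h2
    simp only [C_add, C_mul, C_1] at e1' e2' e3'
    linear_combination (-X^2) * e2' + X * e3' - e1'
  have := Matrix.aeval_self_charpoly A
  rw [hch] at this
  simpa [Algebra.smul_def] using this

lemma smul0 {N : Matrix (Fin 3) (Fin 3) ℤ} {n : ℕ} (hn : 0 < n) (h : n • N = 0) : N = 0 := by
  ext i j
  have := congrFun (congrFun h i) j
  simp only [Matrix.smul_apply, Matrix.zero_apply, nsmul_eq_mul, mul_eq_zero] at this ⊢
  rcases this with h | h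
  · have : n = 0 := by exact_mod_cast h
    omega
  · exact h

lemma unip {A : Matrix (Fin 3) (Fin 3) ℤ} (n : ℕ) (hn : 0 < n) (hA : A ^ n = 1)
    (h : A ^ 3 - (3:ℤ) • A ^ 2 + (3:ℤ) • A - 1 = 0) : A = 1 := by
  set N := A - 1 with hN
  have hA1 : A = 1 + N := by rw [hN]; abel
  have hN3 : N * N * N = 0 := by
    rw [← h, hN]; noncomm_ring
  have s1 : ∀ k : ℕ, N * A ^ k = N + k • (N * N) := by
    intro k
    induction k with
    | zero => simp
    | succ k ih => rw [pow_succ, ← mul_assoc, ih, hA1, mul_add, mul_one, add_mul, smul_mul_assoc,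
        hN3, smul_zero, add_zero, succ_nsmul]; abel
  have hN2 : N * N = 0 := by
    have := s1 n
    rw [hA, mul_one] at this
    have := left_eq_add.1 this
    exact smul0 hn this
  have s2 : ∀ k : ℕ, A ^ k = 1 + k • N := by
    intro k
    induction k with
    | zero => simp
    | succ k ih => rw [pow_succ, ih, hA1, mul_add, mul_one, add_mul, one_mul, smul_mul_assoc, hN2,
        smul_zero, add_zero, succ_nsmul]; abel
  have := s2 n
  rw [hA] at this
  have := left_eq_add.1 this
  have := smul0 hn this
  exact sub_eq_zero.1 this

def Cls (o : ℕ) (t : ℚ) : Prop :=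
  (o = 1 ∧ t = 3) ∨ (o = 2 ∧ t = -1) ∨ (o = 3 ∧ t = 0) ∨ (o = 4 ∧ t = 1) ∨ (o = 6 ∧ t = 2)

lemma elt_cls (A : Matrix (Fin 3) (Fin 3) ℤ) (n : ℕ) (hn : 0 < n) (hA : A ^ n = 1)
    (hd : A.det = 1) : Cls (orderOf A) (A.trace : ℚ) := by
  have h3 : ∀ B : Matrix (Fin 3) (Fin 3) ℤ, B ^ n = 1 → B.det = 1 → B.trace = 3 → B = 1 := by
    intro B hB hB' ht
    have := (elt_cubic B n hn hB hB').1
    rw [ht] at this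
    exact unip n hn hB this
  have tr1 : (1 : Matrix (Fin 3) (Fin 3) ℤ).trace = 3 := by simp
  have hp : ∀ k, (A ^ k) ^ n = 1 := fun k => by rw [← pow_mul, mul_comm, pow_mul, hA, one_pow]
  have hdp : ∀ k, (A ^ k).det = 1 := fun k => by rw [Matrix.det_pow, hd, one_pow]
  obtain ⟨hc, hl, hu⟩ := elt_cubic A n hn hA hd
  have c3 : A ^ 3 = A.trace • A ^ 2 - A.trace • A + 1 := by
    rw [← sub_eq_zero, ← hc]; abel
  -- trace of the square
  have t2 : (A ^ 2).trace = A.trace ^ 2 - 2 * A.trace := by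
    have hinv : A * (A.trace • 1 - A.trace • A + A ^ 2) = 1 := by
      have : A * (A.trace • 1 - A.trace • A + A ^ 2) = A ^ 3 - A.trace • A ^ 2 + A.trace • A := by
        noncomm_ring
      rw [this, sub_eq_zero.1 hc]
    have hadj : A.adjugate = A.trace • 1 - A.trace • A + A ^ 2 := by
      have h := congrArg (A.adjugate * ·) hinv
      simp only [← mul_assoc, Matrix.adjugate_mul, hd, one_smul, one_mul, mul_one] at h
      exact h.symm
    have h5 : A.adjugate.trace * 2 = A.trace ^ 2 - (A ^ 2).trace := by
      rw [Matrix.adjugate_fin_three]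
      simp [Matrix.trace, Fin.sum_univ_three, pow_two, Matrix.mul_apply]
      ring
    have h6 := congrArg Matrix.trace hadj
    simp only [Matrix.trace_add, Matrix.trace_sub, Matrix.trace_smul, tr1, smul_eq_mul] at h6
    linarith
  have t3 : (A ^ 3).trace = A.trace * (A^2).trace - A.trace * A.trace + 3 := by
    rw [c3, Matrix.trace_add, Matrix.trace_sub, Matrix.trace_smul, Matrix.trace_smul, tr1]; simp
  have o2 : ∀ {k}, A ^ k = 1 → orderOf A ∣ k := fun h => orderOf_dvd_of_pow_eq_one h
  generalize ht : A.trace = t at *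
  have e1 : A = 1 → t = 3 := by rintro rfl; rw [← ht]; simp
  have e2 : A ^ 2 = 1 → t ^ 2 - 2 * t = 3 := by intro h; rw [← t2, h, tr1]
  have e3 : A ^ 3 = 1 → t * (A^2).trace - t * t + 3 = 3 := by intro h; rw [← t3, h, tr1]
  rw [t2] at e3
  have hcases : t = -1 ∨ t = 0 ∨ t = 1 ∨ t = 2 ∨ t = 3 := by omega
  rcases hcases with rfl | rfl | rfl | rfl | rfl
  · refine Or.inr (Or.inl ⟨?_, by norm_num⟩)
    apply orderOf_eq_prime
    · exact h3 _ (hp 2) (hdp 2) (by rw [t2]; norm_num)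
    · intro h; have := e1 h; omega
  · refine Or.inr (Or.inr (Or.inl ⟨?_, by norm_num⟩))
    have : Fact (Nat.Prime 3) := ⟨by norm_num⟩
    apply orderOf_eq_prime
    · rw [c3]; simp
    · intro h; have := e1 h; omega
  · refine Or.inr (Or.inr (Or.inr (Or.inl ⟨?_, by norm_num⟩)))
    have : A ^ 4 = 1 := by
      rw [pow_succ, c3]; simp only [one_smul, add_mul, sub_mul, one_mul, ← pow_succ, ← pow_two]; rw [c3]; simp only [one_smul]; abel
    exact orderOf_eq_prime_pow (p := 2) (n := 1) (by intro h; have := e2 h; omega) this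
  · refine Or.inr (Or.inr (Or.inr (Or.inr ⟨?_, by norm_num⟩)))
    have h6 : A ^ 6 = 1 := by
      have c4 : A ^ 4 = 2 • A ^ 2 - 3 • A + (2:ℤ) • 1 := by
        have : A ^ 4 = A ^ 3 * A := by noncomm_ring
        rw [this, c3]
        have : (((2:ℤ) • A ^ 2 - (2:ℤ) • A + 1) * A) = (2:ℤ) • A ^ 3 - (2:ℤ) • A ^ 2 + A := by noncomm_ring
        rw [this, c3]; noncomm_ring
      have : A ^ 6 = A ^ 3 * A ^ 3 := by noncomm_ring
      rw [this, c3]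
      have : ((2:ℤ) • A ^ 2 - (2:ℤ) • A + 1) * ((2:ℤ) • A ^ 2 - (2:ℤ) • A + 1) = (4:ℤ) • A ^ 4 - (8:ℤ) • A ^ 3 + (8:ℤ) • A ^ 2 - (4:ℤ) • A + 1 := by noncomm_ring
      rw [this, c4, c3]; noncomm_ring
    have hdvd := o2 h6
    have hle := Nat.le_of_dvd (by norm_num) hdvd
    have n1 : orderOf A ≠ 1 := fun h => by have := e1 (orderOf_eq_one_iff.1 h); omega
    have n2 : orderOf A ≠ 2 := fun h => by have := e2 (by have := pow_orderOf_eq_one A; rwa [h] at this); omega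
    have n3 : orderOf A ≠ 3 := fun h => by have := e3 (by have := pow_orderOf_eq_one A; rwa [h] at this); omega
    generalize orderOf A = o at *
    clear * - hdvd hle n1 n2 n3
    interval_cases o <;> omega
  · refine Or.inl ⟨?_, by norm_num⟩
    rw [orderOf_eq_one_iff]; exact h3 A hA hd ht


abbrev Mat3 := Matrix (Fin 3) (Fin 3) ℚ

lemma idem0 (M : Mat3) (n : ℚ) (hn : n ≠ 0) (h : M * M = n • M) (ht : M.trace = 0) : M = 0 := by
  have he : IsIdempotentElem (n⁻¹ • M) := by
    unfold IsIdempotentElem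
    rw [smul_mul_smul_comm, h, smul_smul, mul_assoc, inv_mul_cancel₀ hn, mul_one]
  have he' : IsIdempotentElem (Matrix.toLinAlgEquiv' (n⁻¹ • M)) := he.map _
  have := (LinearMap.IsIdempotentElem.trace_eq_zero_iff he').1 (by
    change LinearMap.trace ℚ _ (Matrix.toLin' (n⁻¹ • M)) = 0
    rw [Matrix.trace_toLin'_eq, Matrix.trace_smul, ht, smul_zero])
  have := (map_eq_zero_iff _ (Matrix.toLinAlgEquiv' (R := ℚ) (n := Fin 3)).injective).1 this
  exact (smul_eq_zero.1 this).resolve_left (inv_ne_zero hn)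

open Matrix in
lemma quat0 (A B : Mat3) (w : Fin 3 → ℚ) (b : ℚ) (hb : 0 < b)
    (h1 : A *ᵥ A *ᵥ w = -w) (h2 : A *ᵥ A *ᵥ B *ᵥ w = -(B *ᵥ w)) (h3 : B *ᵥ B *ᵥ w = -(b • w))
    (h4 : B *ᵥ A *ᵥ w = -(A *ᵥ B *ᵥ w)) (h5 : B *ᵥ A *ᵥ B *ᵥ w = b • A *ᵥ w) : w = 0 := by
  have hli : ¬ LinearIndependent ℚ ![w, A *ᵥ w, B *ᵥ w, A *ᵥ B *ᵥ w] := by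
    intro h
    have := h.fintype_card_le_finrank
    simp at this
  rw [Fintype.not_linearIndependent_iff] at hli
  obtain ⟨g, hg, i, hi⟩ := hli
  simp only [Fin.sum_univ_four] at hg
  simp only [Matrix.cons_val] at hg
  have hAv := congrArg (A *ᵥ ·) hg
  have hBv := congrArg (B *ᵥ ·) hg
  have hABv := congrArg (fun v => A *ᵥ B *ᵥ v) hg
  simp only [mulVec_add, mulVec_smul, mulVec_zero, mulVec_neg, h1, h2, h3, h4, h5] at hAv hBv hABv
  generalize A *ᵥ B *ᵥ w = s at *
  generalize A *ᵥ w = q at *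
  generalize B *ᵥ w = r at *
  have : (g 0 ^ 2 + g 1 ^ 2 + b * g 2 ^ 2 + b * g 3 ^ 2) • w = 0 := by
    linear_combination (norm := module) (g 0) • hg - (g 1) • hAv - (g 2) • hBv - (g 3) • hABv
  rcases smul_eq_zero.1 this with h | h
  · exfalso
    have p0 := sq_nonneg (g 0)
    have p1 := sq_nonneg (g 1)
    have p2 := mul_nonneg hb.le (sq_nonneg (g 2))
    have p3 := mul_nonneg hb.le (sq_nonneg (g 3))
    have z0 : g 0 ^ 2 = 0 := by linarith
    have z1 : g 1 ^ 2 = 0 := by linarith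
    have z2 : b * g 2 ^ 2 = 0 := by linarith
    have z3 : b * g 3 ^ 2 = 0 := by linarith
    simp [hb.ne'] at z0 z1 z2 z3
    fin_cases i <;> simp_all
  · exact h

lemma quatE (A B E : Mat3) (b : ℚ) (hb : 0 < b) (hA : A * E = E * A) (hB : B * E = E * B)
    (h1 : A * A * E = -E) (h2 : B * B * E = -(b • E)) (h3 : B * A = -(A * B)) : E = 0 := by
  have key : ∀ u, E.mulVec u = 0 := by
    intro u
    refine quat0 A B (E.mulVec u) b hb ?_ ?_ ?_ ?_ ?_ <;> simp only [Matrix.mulVec_mulVec, ← mul_assoc]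
    · rw [h1, Matrix.neg_mulVec]
    · rw [mul_assoc, hB, ← mul_assoc, h1, Matrix.neg_mul, Matrix.neg_mulVec]
    · rw [h2, Matrix.neg_mulVec, Matrix.smul_mulVec]
    · rw [h3, Matrix.neg_mul, Matrix.neg_mulVec]
    · rw [h3, Matrix.neg_mul, Matrix.neg_mul, mul_assoc A, mul_assoc A, h2, ← Matrix.smul_mulVec]
      simp
  apply Matrix.ext_of_mulVec_single
  intro i
  rw [key, Matrix.zero_mulVec]

def Good {G : Type*} [Group G] (ρ : G →* Mat3) : Prop := ∀ g, Cls (orderOf g) (ρ g).trace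

set_option linter.unusedSectionVars false
section
variable {G : Type*} [Group G] [Finite G] {ρ : G →* Mat3}

lemma Good.sub (h : Good ρ) (K : Subgroup G) : Good (ρ.comp K.subtype) := by
  intro g
  have := h g
  rwa [Subgroup.orderOf_coe] at this

lemma Good.tr (h : Good ρ) {g : G} {n : ℕ} (hg : orderOf g = n) : Cls n (ρ g).trace := hg ▸ h g

lemma Good.t2 (h : Good ρ) {g : G} (hg : orderOf g = 2) : (ρ g).trace = -1 := by
  have := h.tr hg; simpa [Cls] using this
lemma Good.t3 (h : Good ρ) {g : G} (hg : orderOf g = 3) : (ρ g).trace = 0 := by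
  have := h.tr hg; simpa [Cls] using this
lemma Good.t4 (h : Good ρ) {g : G} (hg : orderOf g = 4) : (ρ g).trace = 1 := by
  have := h.tr hg; simpa [Cls] using this
lemma Good.t6 (h : Good ρ) {g : G} (hg : orderOf g = 6) : (ρ g).trace = 2 := by
  have := h.tr hg; simpa [Cls] using this

lemma Good.ord (h : Good ρ) (g : G) :
    orderOf g = 1 ∨ orderOf g = 2 ∨ orderOf g = 3 ∨ orderOf g = 4 ∨ orderOf g = 6 := by
  have := h g; unfold Cls at this; tauto

lemma sq_of_two {g : G} (hg : orderOf g = 2) : g * g = 1 := by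
  rw [← pow_two, ← hg]; exact pow_orderOf_eq_one g

lemma two_of_sq {g : G} (hg : g * g = 1) (h1 : g ≠ 1) : orderOf g = 2 :=
  orderOf_eq_prime (by rw [pow_two]; exact hg) h1

lemma four_of {g : G} (hg : orderOf (g * g) = 2) : orderOf g = 4 := by
  refine orderOf_eq_prime_pow (p := 2) (n := 1) ?_ ?_
  · intro h
    rw [pow_one, pow_two] at h
    rw [h] at hg; simp at hg
  · have := sq_of_two hg
    rw [← this]; norm_num [pow_succ, mul_assoc]

lemma four_sq {g : G} (hg : orderOf g = 4) : orderOf (g * g) = 2 := by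
  rw [← pow_two, orderOf_pow, hg]; rfl

/-- the four group has zero sum -/
lemma Good.klein (h : Good ρ) {x z : G} (hx : orderOf x = 2) (hz : orderOf z = 2) (hxz : x ≠ z)
    (hc : x * z = z * x) : 1 + ρ x + ρ z + ρ (x * z) = 0 := by
  have xx := sq_of_two hx
  have zz := sq_of_two hz
  have hX : ρ x * ρ x = 1 := by rw [← map_mul, xx, map_one]
  have hZ : ρ z * ρ z = 1 := by rw [← map_mul, zz, map_one]
  have hC : ρ x * ρ z = ρ z * ρ x := by rw [← map_mul, hc, map_mul]
  have ho : orderOf (x * z) = 2 := by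
    apply two_of_sq
    · rw [show x * z * (x * z) = x * (z * x) * z by group, ← hc,
        show x * (x * z) * z = (x * x) * (z * z) by group, xx, zz, one_mul]
    · intro h; apply hxz; rw [mul_eq_one_iff_eq_inv.1 h]; exact inv_eq_of_mul_eq_one_left zz
  apply idem0 _ 4 (by norm_num)
  · rw [map_mul]
    have e1 : ρ x * (ρ x * ρ z) = ρ z := by rw [← mul_assoc, hX, one_mul]
    have e2 : ρ z * (ρ x * ρ z) = ρ x := by rw [hC, ← mul_assoc, hZ, one_mul]
    have e3 : (ρ x * ρ z) * ρ x = ρ z := by rw [hC, mul_assoc, hX, mul_one]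
    have e4 : (ρ x * ρ z) * ρ z = ρ x := by rw [mul_assoc, hZ, mul_one]
    have e5 : (ρ x * ρ z) * (ρ x * ρ z) = 1 := by rw [mul_assoc, e2, hX]
    simp only [add_mul, mul_add, one_mul, mul_one, e1, e2, e3, e4, e5, hX, hZ, ← hC]
    module
  · rw [Matrix.trace_add, Matrix.trace_add, Matrix.trace_add, h.t2 hx, h.t2 hz, h.t2 ho]
    simp; norm_num

lemma Good.klein' (h : Good ρ) {x z : G} (hx : orderOf x = 2) (hz : orderOf z = 2) (hxz : x ≠ z)
    (hc : x * z = z * x) (g : G) :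
    (ρ g).trace + (ρ (x * g)).trace + (ρ (z * g)).trace + (ρ (x * z * g)).trace = 0 := by
  have := congrArg (fun M => (M * ρ g).trace) (h.klein hx hz hxz hc)
  simpa [add_mul, Matrix.trace_add, ← map_mul] using this

lemma six_of {x c : G} (hx : orderOf x = 2) (hc : orderOf c = 3) (h : x * c = c * x) :
    orderOf (x * c) = 6 := by
  have : Commute x c := h
  rw [this.orderOf_mul_eq_mul_orderOf_of_coprime (by rw [hx, hc]; norm_num), hx, hc]

/-- no four group centralizes an element of order three -/
lemma Good.L1 (h : Good ρ) {x z c : G} (hx : orderOf x = 2) (hz : orderOf z = 2) (hxz : x ≠ z)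
    (hc : x * z = z * x) (h3 : orderOf c = 3) (hxc : x * c = c * x) (hzc : z * c = c * z) :
    False := by
  have xx := sq_of_two hx
  have zz := sq_of_two hz
  have ho : orderOf (x * z) = 2 := by
    apply two_of_sq
    · rw [show x * z * (x * z) = x * (z * x) * z by group, ← hc,
        show x * (x * z) * z = (x * x) * (z * z) by group, xx, zz, one_mul]
    · intro h; apply hxz; rw [mul_eq_one_iff_eq_inv.1 h]; exact inv_eq_of_mul_eq_one_left zz
  have := h.klein' hx hz hxz hc c
  rw [h.t3 h3, h.t6 (six_of hx h3 hxc), h.t6 (six_of hz h3 hzc),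
    h.t6 (six_of ho h3 (by rw [mul_assoc, hzc, ← mul_assoc, hxc, mul_assoc]))] at this
  norm_num at this

/-- no other involution commutes with an element of order four -/
lemma Good.L2 (h : Good ρ) {x q : G} (hx : orderOf x = 2) (hq : orderOf q = 4) (hxq : x ≠ q * q)
    (hc : x * q = q * x) : False := by
  have xx := sq_of_two hx
  have hz := four_sq hq
  have zz := sq_of_two hz
  have hcz : x * (q * q) = (q * q) * x := by rw [← mul_assoc, hc, mul_assoc, hc, mul_assoc]
  have := h.klein' hx hz hxq hcz q
  have o1 : orderOf (x * q) = 4 := by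
    apply four_of
    rwa [show x * q * (x * q) = x * (q * x) * q by group, ← hc,
        show x * (x * q) * q = (x * x) * (q * q) by group, xx, one_mul]
  have o2 : orderOf (q * q * q) = 4 := by
    have : q * q * q = q⁻¹ := by
      rw [eq_inv_iff_mul_eq_one, mul_assoc, zz]
    rw [this, orderOf_inv, hq]
  have o3 : orderOf (x * (q * q) * q) = 4 := by
    have : x * (q * q) * q = x * q⁻¹ := by
      rw [mul_assoc]; congr 1
      rw [eq_inv_iff_mul_eq_one, mul_assoc, zz]
    rw [this]
    have e : x * q⁻¹ = (x * q)⁻¹ := by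
      rw [eq_inv_iff_mul_eq_one, hc, mul_assoc, inv_mul_cancel_left, xx]
    rw [e, orderOf_inv, o1]
  rw [h.t4 hq, h.t4 o1, h.t4 o2, h.t4 o3] at this
  norm_num at this

lemma Good.noquat (h : Good ρ) {r s : G} (hrs : s * r = r⁻¹ * s) (hs : orderOf s = 4)
    (hr : (orderOf r = 4 ∧ s * s = r * r) ∨ (orderOf r = 6 ∧ s * s = r * r * r)) : False := by
  have hss := four_sq hs
  set A := ρ s with hA
  set R := ρ r with hR
  set R' := ρ r⁻¹ with hR'
  have RR' : R * R' = 1 := by rw [hR, hR', ← map_mul, mul_inv_cancel, map_one]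
  have R'R : R' * R = 1 := by rw [hR, hR', ← map_mul, inv_mul_cancel, map_one]
  have AR : A * R = R' * A := by rw [hA, hR, hR', ← map_mul, hrs, map_mul]
  have AR' : A * R' = R * A := by
    rw [hA, hR, hR', ← map_mul, ← map_mul]; congr 1
    rw [mul_inv_eq_iff_eq_mul, mul_assoc, hrs, mul_inv_cancel_left]
  have A4 : A * A * (A * A) = 1 := by
    rw [hA, ← map_mul, ← map_mul, sq_of_two hss, map_one]
  set E : Mat3 := 1 - A * A with hE
  have AAE : A * A * E = -E := by rw [hE, mul_sub, A4, mul_one]; abel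
  have hE0 : E ≠ 0 := by
    intro h0
    have h1 := h.t2 hss
    rw [map_mul, ← hA, ← sub_eq_zero.1 h0] at h1
    norm_num at h1
  have hAE : A * E = E * A := by rw [hE]; noncomm_ring
  have RAA : R * (A * A) = A * A * R := by
    rw [mul_assoc, AR, ← mul_assoc, ← mul_assoc, AR', mul_assoc]
  have R'AA : R' * (A * A) = A * A * R' := by
    rw [mul_assoc, AR', ← mul_assoc, ← mul_assoc, AR, mul_assoc]
  have hBE : (R - R') * E = E * (R - R') := by
    rw [hE, sub_mul, mul_sub, mul_sub, RAA, R'AA, sub_mul, mul_sub, mul_sub]; simp; abel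
  have hBA : (R - R') * A = -(A * (R - R')) := by
    rw [sub_mul, mul_sub, AR, AR']; abel
  have hBB : (R - R') * (R - R') = R * R + R' * R' - (2:ℚ) • 1 := by
    rw [sub_mul, mul_sub, mul_sub, RR', R'R, two_smul]; abel
  rcases hr with ⟨hr, e⟩ | ⟨hr, e⟩
  · have eA : R * R = A * A := by rw [hR, hA, ← map_mul, ← map_mul, e]
    have eA' : R' * R' = A * A := by
      rw [hR', hA, ← map_mul, ← map_mul, e]; congr 1
      have := sq_of_two (four_sq hr)
      rw [← mul_inv_rev]; exact inv_eq_of_mul_eq_one_left this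
    refine hE0 (quatE A (R - R') E 4 (by norm_num) hAE hBE AAE ?_ hBA)
    rw [hBB, eA, eA', sub_mul, add_mul, AAE, smul_mul_assoc, one_mul]; module
  · have eA : R * R * R = A * A := by simp only [hR, hA, ← map_mul, e]
    have R6 : R * R * R * (R * R * R) = 1 := by rw [eA, A4]
    have eR' : R' * R' = R * R * R * R := by
      have : (R * R * R * R) * (R * R) = 1 := by rw [← R6]; simp only [mul_assoc]
      calc R' * R' = (R * R * R * R) * (R * R) * (R' * R') := by rw [this, one_mul]
        _ = (R * R * R * R) * (R * (R * R') * R') := by simp only [mul_assoc]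
        _ = _ := by rw [RR', mul_one, RR', mul_one]
    have hM : E * (R * R - R + 1) = 0 := by
      apply idem0 _ 6 (by norm_num)
      · rw [hE, ← eA]
        have p6 : R ^ 6 = 1 := by rw [← R6]; noncomm_ring
        have lhs : (1 - R * R * R) * (R * R - R + 1) = 1 - R + R^2 - R^3 + R^4 - R^5 := by
          noncomm_ring
        rw [lhs]
        have hRM : R * (1 - R + R^2 - R^3 + R^4 - R^5) = -(1 - R + R^2 - R^3 + R^4 - R^5) := by
          have : R * (1 - R + R^2 - R^3 + R^4 - R^5) = R - R^2 + R^3 - R^4 + R^5 - R^6 := by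
            noncomm_ring
          rw [this, p6]; abel
        generalize hMM : 1 - R + R^2 - R^3 + R^4 - R^5 = M at hRM ⊢
        have q2 : R ^ 2 * M = M := by rw [pow_two, mul_assoc, hRM, mul_neg, hRM, neg_neg]
        have q3 : R ^ 3 * M = -M := by rw [pow_succ, mul_assoc, hRM, mul_neg, q2]
        have q4 : R ^ 4 * M = M := by rw [pow_succ, mul_assoc, hRM, mul_neg, q3, neg_neg]
        have q5 : R ^ 5 * M = -M := by rw [pow_succ, mul_assoc, hRM, mul_neg, q4]
        nth_rewrite 1 [← hMM]
        simp only [sub_mul, add_mul, one_mul, hRM, q2, q3, q4, q5]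
        module
      · have g2 : orderOf (r * r) = 3 := by rw [← pow_two, orderOf_pow, hr]; rfl
        have g3 : orderOf (r * r * r) = 2 := by rw [← e, hss]
        have g4 : orderOf (r * r * r * r) = 3 := by
          rw [show r * r * r * r = r ^ 4 by simp [pow_succ], orderOf_pow, hr]; rfl
        have g5 : orderOf (r * r * r * r * r) = 6 := by
          rw [show r * r * r * r * r = r ^ 5 by simp [pow_succ], orderOf_pow, hr]; rfl
        have lhs : E * (R * R - R + 1) = 1 - R + R*R - R*R*R + R*R*R*R - R*R*R*R*R := by
          rw [hE, ← eA]; noncomm_ring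
        have tt2 := h.t3 g2
        have tt3 := h.t2 g3
        have tt4 := h.t3 g4
        have tt5 := h.t6 g5
        have tt1 := h.t6 hr
        simp only [map_mul, ← hR] at tt1 tt2 tt3 tt4 tt5
        rw [lhs]
        simp only [Matrix.trace_add, Matrix.trace_sub, tt1, tt2, tt3, tt4, tt5]
        simp; norm_num
    refine hE0 (quatE A (R - R') E 3 (by norm_num) hAE hBE AAE ?_ hBA)
    have RE : R * E = E * R := by rw [hE, mul_sub, RAA, sub_mul]; simp
    have hM' : R * R * E = R * E - E := by
      have h1 : R * R * E = E * (R * R) := by rw [mul_assoc, RE, ← mul_assoc, RE, mul_assoc]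
      rw [h1, RE]
      rw [mul_add, mul_sub, mul_one] at hM
      rw [← sub_eq_zero, ← hM]; abel
    have R4E : R * R * R * R * E = -(R * E) := by
      rw [mul_assoc, RE, ← mul_assoc, eA, AAE]; simp
    rw [hBB, eR', sub_mul, add_mul, R4E, hM', smul_mul_assoc, one_mul]; module
end

set_option linter.unusedSectionVars false
section
variable {G : Type*} [Group G] [Finite G] {ρ : G →* Mat3}

lemma sum_rep [Fintype G] (ρ : G →* Mat3) :
    (∃ k : ℕ, ∑ g, (ρ g).trace = (Nat.card G : ℚ) * k) ∧
    (∃ m : ℕ, ∑ g, (ρ g).trace * (ρ g).trace = (Nat.card G : ℚ) * m) := by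
  let R : Representation ℚ G (Fin 3 → ℚ) :=
    (Matrix.toLinAlgEquiv' (R := ℚ) (n := Fin 3) : Mat3 →* _).comp ρ
  have hc : (Nat.card G : ℚ) ≠ 0 := by exact_mod_cast Nat.card_pos.ne'
  have : Invertible (Nat.card G : ℚ) := invertibleOfNonzero hc
  have hR : ∀ g, R.character g = (ρ g).trace := by
    intro g
    change LinearMap.trace ℚ _ (Matrix.toLin' (ρ g)) = _
    rw [Matrix.trace_toLin'_eq]
  have h1 := Representation.card_inv_mul_sum_char_eq_finrank R
  have h2 := Representation.card_inv_mul_sum_char_eq_finrank (R.tprod R)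
  rw [Representation.char_tensor] at h2
  simp only [Pi.mul_apply, hR] at h1 h2
  rw [inv_mul_eq_iff_eq_mul₀ hc] at h1 h2
  exact ⟨⟨_, h1⟩, ⟨_, h2⟩⟩

noncomputable def cnt (G : Type*) [Group G] (n : ℕ) : ℕ := Nat.card {g : G // orderOf g = n}

lemma Good.count (h : Good ρ) : (1 + cnt G 2 + cnt G 3 + cnt G 4 + cnt G 6 = Nat.card G) ∧
    (∃ k : ℕ, (3 - cnt G 2 + cnt G 4 + 2 * cnt G 6 : ℤ) = Nat.card G * k) ∧
    (∃ m : ℕ, (9 + cnt G 2 + cnt G 4 + 4 * cnt G 6 : ℤ) = Nat.card G * m) := by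
  classical
  have := Fintype.ofFinite G
  have hcnt : ∀ n, (cnt G n : ℚ) = ∑ g : G, if orderOf g = n then (1:ℚ) else 0 := by
    intro n
    rw [Finset.sum_boole, cnt, Nat.card_eq_fintype_card, Fintype.card_subtype]
  have h1 : cnt G 1 = 1 := by
    have := hcnt 1
    simp only [orderOf_eq_one_iff, Finset.sum_ite_eq', Finset.mem_univ, if_true] at this
    exact_mod_cast this
  have hcard : (Nat.card G : ℚ) = ∑ g : G, (1:ℚ) := by simp
  obtain ⟨⟨k, hk⟩, ⟨m, hm⟩⟩ := sum_rep ρ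
  refine ⟨?_, ⟨k, ?_⟩, ⟨m, ?_⟩⟩
  · rw [← h1]
    have : (cnt G 1 + cnt G 2 + cnt G 3 + cnt G 4 + cnt G 6 : ℚ) = Nat.card G := by
      simp only [hcnt, ← Finset.sum_add_distrib, hcard]
      apply Finset.sum_congr rfl
      intro g _
      rcases h.ord g with e | e | e | e | e <;> simp [e]
    exact_mod_cast this
  · have : (3 * cnt G 1 - cnt G 2 + cnt G 4 + 2 * cnt G 6 : ℚ) = Nat.card G * k := by
      rw [← hk]
      simp only [hcnt, Finset.mul_sum, ← Finset.sum_add_distrib, ← Finset.sum_sub_distrib]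
      apply Finset.sum_congr rfl
      intro g _
      rcases h g with ⟨e, e'⟩ | ⟨e, e'⟩ | ⟨e, e'⟩ | ⟨e, e'⟩ | ⟨e, e'⟩ <;> rw [e'] <;> simp [e]
    rw [h1] at this
    have h3 : ((3 - cnt G 2 + cnt G 4 + 2 * cnt G 6 : ℤ) : ℚ) = ((Nat.card G * k : ℤ) : ℚ) := by
      push_cast; rw [← this]; push_cast; ring
    exact_mod_cast h3
  · have : (9 * cnt G 1 + cnt G 2 + cnt G 4 + 4 * cnt G 6 : ℚ) = Nat.card G * m := by
      rw [← hm]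
      simp only [hcnt, Finset.mul_sum, ← Finset.sum_add_distrib, ← Finset.sum_sub_distrib]
      apply Finset.sum_congr rfl
      intro g _
      rcases h g with ⟨e, e'⟩ | ⟨e, e'⟩ | ⟨e, e'⟩ | ⟨e, e'⟩ | ⟨e, e'⟩ <;> rw [e'] <;> simp [e] <;> norm_num
    rw [h1] at this
    have h3 : ((9 + cnt G 2 + cnt G 4 + 4 * cnt G 6 : ℤ) : ℚ) = ((Nat.card G * m : ℤ) : ℚ) := by
      push_cast; rw [← this]; push_cast; ring
    exact_mod_cast h3

lemma cnt_zero {n : ℕ} (h : ∀ g : G, orderOf g ≠ n) : cnt G n = 0 := by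
  have : IsEmpty {g : G // orderOf g = n} := ⟨fun x => h x.1 x.2⟩
  exact Nat.card_of_isEmpty

lemma cnt_zero' {n : ℕ} (h : ¬ n ∣ Nat.card G) : cnt G n = 0 :=
  cnt_zero (fun g hg => h (hg ▸ orderOf_dvd_natCard g))

lemma Good.card_dvd (h : Good ρ) : Nat.card G ∣ 24 := by
  rw [Nat.dvd_iff_prime_pow_dvd_dvd]
  intro p k hp hpk
  rcases Nat.eq_zero_or_pos k with rfl | hk
  · simp
  have : Fact p.Prime := ⟨hp⟩
  have hpd : p ∣ Nat.card G := (dvd_pow_self p hk.ne').trans hpk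
  obtain ⟨g, hg⟩ := exists_prime_orderOf_dvd_card' p hpd
  have hp23 : p = 2 ∨ p = 3 := by
    have := h.ord g
    rw [hg] at this
    rcases this with e | e | e | e | e
    · subst e; exact absurd hp (by norm_num)
    · exact Or.inl e
    · exact Or.inr e
    · subst e; exact absurd hp (by norm_num)
    · subst e; exact absurd hp (by norm_num)
  obtain ⟨K, hK⟩ := Sylow.exists_subgroup_card_pow_prime p hpk
  obtain ⟨c1, ⟨a, c2⟩, ⟨m, c3⟩⟩ := (h.sub K).count
  have nd : ∀ q, q.Prime → q ≠ p → ¬ q ∣ Nat.card K := by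
    intro q hq hqp hd
    rw [hK] at hd
    exact hqp ((Nat.prime_dvd_prime_iff_eq hq hp).1 (hq.dvd_of_dvd_pow hd))
  rcases hp23 with rfl | rfl
  · have n3 := nd 3 (by norm_num) (by norm_num)
    rw [cnt_zero' (n := 3) n3, cnt_zero' (n := 6) (fun h => n3 (dvd_trans (by norm_num) h))] at c1
    rw [cnt_zero' (n := 6) (fun h => n3 (dvd_trans (by norm_num) h))] at c3
    rw [← hK]
    have : (Nat.card K : ℤ) ∣ 8 := ⟨m - 1, by
      rw [mul_sub, ← c3, ← c1]; push_cast; ring⟩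
    have : Nat.card K ∣ 8 := by exact_mod_cast this
    exact this.trans (by norm_num)
  · have n2 := nd 2 (by norm_num) (by norm_num)
    rw [cnt_zero' (n := 2) n2, cnt_zero' (n := 4) (fun h => n2 (dvd_trans (by norm_num) h)),
      cnt_zero' (n := 6) (fun h => n2 (dvd_trans (by norm_num) h))] at c2
    rw [← hK]
    have : (Nat.card K : ℤ) ∣ 3 := ⟨a, by rw [← c2]; norm_num⟩
    have : Nat.card K ∣ 3 := by exact_mod_cast this
    exact this.trans (by norm_num)

/-- recognition of dihedral groups -/
lemma dihedral_of {n : ℕ} [NeZero n] {r s : G} (hG : Nat.card G = 2 * n) (hr : orderOf r = n)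
    (hs : s ∉ Subgroup.zpowers r) (hss : s * s = 1) (hrs : s * r = r⁻¹ * s) :
    Nonempty (G ≃* DihedralGroup n) := by
  have hrn : r ^ n = 1 := hr ▸ pow_orderOf_eq_one r
  let φ : Multiplicative (ZMod n) →* G := AddMonoidHom.toMultiplicativeLeft
    (ZMod.lift n ⟨zmultiplesHom (Additive G) (Additive.ofMul r), by
      simp [← ofMul_pow, hrn]⟩)
  let f : ZMod n → G := fun i => φ (Multiplicative.ofAdd i)
  have f_add : ∀ i j, f (i + j) = f i * f j := fun i j => by
    simp only [f, ofAdd_add, map_mul]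
  have f_int : ∀ k : ℤ, f (k : ZMod n) = r ^ k := by
    intro k
    simp [f, φ]
  have f_neg : ∀ i, f (-i) = (f i)⁻¹ := fun i => by
    simp only [f, ofAdd_neg, map_inv]
  have f_sub : ∀ i j, f (i - j) = f i * (f j)⁻¹ := fun i j => by
    rw [sub_eq_add_neg, f_add, f_neg]
  have hsi : s⁻¹ = s := inv_eq_of_mul_eq_one_left hss
  have srs : s * r * s⁻¹ = r⁻¹ := by rw [hrs, mul_inv_cancel_right]
  have sf : ∀ i, s * f i = (f i)⁻¹ * s := by
    intro i
    obtain ⟨k, rfl⟩ := ZMod.intCast_surjective i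
    rw [f_int, ← mul_inv_eq_iff_eq_mul, ← conj_zpow, srs, inv_zpow]
  have fs : ∀ i, f i * s = s * (f i)⁻¹ := by
    intro i; rw [← f_neg, sf, f_neg, inv_inv]
  have f_comm : ∀ i j, f i * f j = f j * f i := fun i j => by rw [← f_add, add_comm, f_add]
  have f_inj : ∀ i, f i = 1 → i = 0 := by
    intro i hi
    obtain ⟨k, rfl⟩ := ZMod.intCast_surjective i
    rw [f_int] at hi
    rw [ZMod.intCast_zmod_eq_zero_iff_dvd, ← hr]
    exact orderOf_dvd_iff_zpow_eq_one.2 hi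
  let F : DihedralGroup n →* G := MonoidHom.mk' (fun x => match x with
    | .r i => f i
    | .sr i => s * f i) (by
      rintro (i | i) (j | j)
      · simp [f_add]
      · simp only [DihedralGroup.r_mul_sr, f_sub]
        rw [← mul_assoc (f i), fs, mul_assoc, ← f_neg, f_comm]
      · simp [f_add, mul_assoc]
      · simp only [DihedralGroup.sr_mul_sr, f_sub]
        rw [mul_assoc, ← mul_assoc (f i), fs, ← mul_assoc, ← mul_assoc, hss, one_mul, ← f_neg, f_comm])
  have Finj : Function.Injective F := by
    rw [injective_iff_map_eq_one]
    rintro (i | i) hi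
    · have : f i = 1 := hi
      rw [f_inj i this]; rfl
    · exfalso
      have hi : s * f i = 1 := hi
      obtain ⟨k, rfl⟩ := ZMod.intCast_surjective i
      rw [f_int] at hi
      apply hs
      rw [mul_eq_one_iff_eq_inv.1 hi]
      exact Subgroup.inv_mem _ (Subgroup.zpow_mem_zpowers r k)
  have Fbij : Function.Bijective F := by
    rw [Nat.bijective_iff_injective_and_card]
    exact ⟨Finj, by rw [hG, DihedralGroup.nat_card]⟩
  exact ⟨(MulEquiv.ofBijective F Fbij).symm⟩

lemma cyclic_of {n : ℕ} [NeZero n] {r : G} (hG : Nat.card G = n) (hr : orderOf r = n) :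
    Nonempty (G ≃* Multiplicative (ZMod n)) := by
  have : IsCyclic G := isCyclic_of_orderOf_eq_card r (by rw [hr, hG])
  exact ⟨mulEquivOfCyclicCardEq (by rw [hG]; simp)⟩
end

section
variable {G : Type*} [Group G] [Finite G] {ρ : G →* Mat3}

lemma mem_zp {r x : G} (n : ℕ) (hr : orderOf r = n) (hx : x ∈ Subgroup.zpowers r) :
    ∃ k, k < n ∧ x = r ^ k := by
  classical
  obtain ⟨k, hk⟩ := mem_zpowers_iff_mem_range_orderOf.1 hx |> Finset.mem_image.1
  rw [hr] at hk
  exact ⟨k, Finset.mem_range.1 hk.1, hk.2.symm⟩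

lemma inv_of_pow {r : G} {n : ℕ} (hr : orderOf r = n + 1) : r ^ n = r⁻¹ := by
  rw [eq_inv_iff_mul_eq_one, ← pow_succ, ← hr, pow_orderOf_eq_one]

lemma gen_of {r x : G} (n : ℕ) (hn : n = 3 ∨ n = 4 ∨ n = 6) (hr : orderOf r = n)
    (hx : x ∈ Subgroup.zpowers r) (ho : orderOf x = n) : x = r ∨ x = r⁻¹ := by
  obtain ⟨k, hk, rfl⟩ := mem_zp n hr hx
  rw [orderOf_pow, hr] at ho
  rcases hn with rfl | rfl | rfl <;> interval_cases k <;> simp at ho <;>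
    first | (left; simp) | (right; exact inv_of_pow hr)

lemma conj_of {r : G} (n : ℕ) (hn : n = 3 ∨ n = 4 ∨ n = 6) (hr : orderOf r = n)
    [hN : (Subgroup.zpowers r).Normal] (g : G) : g * r = r * g ∨ g * r = r⁻¹ * g := by
  have := gen_of (x := g * r * g⁻¹) n hn hr (hN.conj_mem r (Subgroup.mem_zpowers r) g)
    (by rw [← hr]; exact (orderOf_injective (MulAut.conj g).toMonoidHom (MulAut.conj g).injective r))
  simpa [mul_inv_eq_iff_eq_mul] using this

lemma idx_zp {r : G} (n : ℕ) (hr : orderOf r = n) (m : ℕ) (hm : Nat.card G = m * n) (hn : 0 < n) :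
    (Subgroup.zpowers r).index = m := by
  have := (Subgroup.zpowers r).index_mul_card
  rw [Nat.card_zpowers, hr, hm] at this
  exact Nat.eq_of_mul_eq_mul_right hn this

lemma ex_notMem (K : Subgroup G) (h : K.index = 2) : ∃ s, s ∉ K := by
  by_contra hh
  push Not at hh
  have : K = ⊤ := by ext x; simp [hh x]
  rw [this] at h; simp at h

lemma pow4 {r : G} (hr : orderOf r = 4) : r * r * (r * r) = 1 := by
  have := pow_orderOf_eq_one r
  rw [hr] at this
  rw [← this]; simp only [pow_succ, pow_zero, one_mul, mul_assoc]

lemma case6 (h : Nat.card G = 6) :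
    Nonempty (G ≃* Multiplicative (ZMod 6)) ∨ Nonempty (G ≃* DihedralGroup 3) := by
  obtain ⟨c, hc⟩ := exists_prime_orderOf_dvd_card' (G := G) (hp := ⟨Nat.prime_three⟩) 3 (by rw [h]; norm_num)
  obtain ⟨s, hs⟩ := exists_prime_orderOf_dvd_card' (G := G) (hp := ⟨Nat.prime_two⟩) 2 (by rw [h]; norm_num)
  have hi := idx_zp 3 hc 2 (by rw [h]) (by norm_num)
  have := Subgroup.normal_of_index_eq_two hi
  rcases conj_of 3 (by simp) hc s with h1 | h1
  · left; exact cyclic_of h (six_of hs hc h1)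
  · right
    refine dihedral_of (by rw [h]) hc ?_ (sq_of_two hs) h1
    intro hm
    have := Subgroup.orderOf_dvd_natCard _ hm
    rw [Nat.card_zpowers, hs, hc] at this
    norm_num at this

lemma case4 (h : Nat.card G = 4) (g : Good ρ) :
    Nonempty (G ≃* Multiplicative (ZMod 4)) ∨ Nonempty (G ≃* DihedralGroup 2) := by
  by_cases h4 : ∃ r : G, orderOf r = 4
  · obtain ⟨r, hr⟩ := h4
    left; exact cyclic_of h hr
  · right
    push Not at h4
    have : IsKleinFour G := ⟨h, by
      have hd : Monoid.exponent G ∣ 2 := by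
        rw [Monoid.exponent_dvd]
        intro x
        have h1 := orderOf_dvd_natCard x
        have h2 := h4 x
        rw [h] at h1
        rcases g.ord x with e | e | e | e | e <;> rw [e] at h1 h2 ⊢ <;> norm_num at *
      rcases (Nat.dvd_prime Nat.prime_two).1 hd with e | e
      · rw [Monoid.exp_eq_one_iff] at e
        rw [Nat.card_of_subsingleton (1:G)] at h; norm_num at h
      · exact e⟩
    exact IsKleinFour.nonempty_mulEquiv

lemma case8 (h : Nat.card G = 8) (g : Good ρ) : ∃ r s : G, orderOf r = 4 ∧
    s ∉ Subgroup.zpowers r ∧ s * s = 1 ∧ s * r = r⁻¹ * s := by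
  have n3 : ¬ 3 ∣ Nat.card G := by rw [h]; norm_num
  obtain ⟨c1, ⟨k, c2⟩, -⟩ := g.count
  rw [cnt_zero' (n := 3) n3, cnt_zero' (n := 6) (fun h => n3 (dvd_trans (by norm_num) h))] at c1
  rw [cnt_zero' (n := 6) (fun h => n3 (dvd_trans (by norm_num) h))] at c2
  rw [h] at c1 c2
  have h4 : ∃ r : G, orderOf r = 4 := by
    by_contra hh
    push Not at hh
    have : cnt G 4 = 0 := by
      unfold cnt
      rw [Nat.card_eq_zero]; left; exact ⟨fun x => hh x.1 x.2⟩
    rw [this] at c1 c2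
    omega
  obtain ⟨r, hr⟩ := h4
  have hi := idx_zp 4 hr 2 (by rw [h]) (by norm_num)
  have hN := Subgroup.normal_of_index_eq_two hi
  obtain ⟨s, hs⟩ := ex_notMem _ hi
  have hss := Subgroup.mul_self_mem_of_index_two hi s
  have h1s : s ≠ 1 := fun e => hs (e ▸ Subgroup.one_mem _)
  have rr : orderOf (r * r) = 2 := four_sq hr
  -- s has order 2 or order 4 with s^2 = r^2
  have key : s * s = 1 ∨ (orderOf s = 4 ∧ s * s = r * r) := by
    have hd := orderOf_dvd_natCard s
    rw [h] at hd
    rcases g.ord s with e | e | e | e | e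
    · exact absurd (orderOf_eq_one_iff.1 e) h1s
    · left; exact sq_of_two e
    · rw [e] at hd; norm_num at hd
    · right; refine ⟨e, ?_⟩
      have e2 := four_sq e
      obtain ⟨k, hk, hk'⟩ := mem_zp 4 hr hss
      rw [hk', orderOf_pow, hr] at e2
      interval_cases k <;> simp at e2
      rw [hk', pow_two]
    · rw [e] at hd; norm_num at hd
  rcases conj_of 4 (by simp) hr s with hc | hc
  · exfalso
    rcases key with h2 | ⟨h2, h3⟩
    · refine g.L2 (two_of_sq h2 h1s) hr ?_ hc
      rintro rfl
      exact hs (Subgroup.mul_mem _ (Subgroup.mem_zpowers r) (Subgroup.mem_zpowers r))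
    · have hns : s * r ∉ Subgroup.zpowers r := fun hh => hs ((Subgroup.mul_mem_cancel_right _ (Subgroup.mem_zpowers r)).1 hh)
      have hcc : Commute s r := hc
      refine g.L2 (x := s * r) (two_of_sq ?_ ?_) hr ?_ ?_
      · rw [hcc.symm.mul_mul_mul_comm, h3]; exact pow4 hr
      · intro e; exact hns (e ▸ Subgroup.one_mem _)
      · intro e; exact hns (e ▸ Subgroup.mul_mem _ (Subgroup.mem_zpowers r) (Subgroup.mem_zpowers r))
      · exact (hcc.mul_left (Commute.refl r))
  · rcases key with h2 | ⟨h2, h3⟩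
    · exact ⟨r, s, hr, hs, h2, hc⟩
    · exact (g.noquat hc h2 (Or.inl ⟨hr, h3⟩)).elim
end

section
variable {G : Type*} [Group G] [Finite G] {ρ : G →* Mat3}

lemma Good.L1c (g : Good ρ) {c : G} (hc : orderOf c = 3) (hz : ∀ x, x * c = c * x)
    (h4 : 4 ∣ Nat.card G) : False := by
  have : Fact (Nat.Prime 2) := ⟨Nat.prime_two⟩
  obtain ⟨V, hV⟩ := Sylow.exists_subgroup_card_pow_prime (G := G) (n := 2) 2 h4
  have : Fact (Nat.Prime 2) := ⟨Nat.prime_two⟩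
  have hcomm := IsPGroup.isMulCommutative_of_card_eq_prime_sq hV
  obtain ⟨x, hx⟩ := exists_prime_orderOf_dvd_card' (G := V) 2 (by rw [hV]; norm_num)
  obtain ⟨y, hy⟩ := ex_notMem _ (idx_zp 2 hx 2 (by rw [hV]; norm_num) (by norm_num))
  have hyx : y ≠ x := by rintro rfl; exact hy (Subgroup.mem_zpowers _)
  have hy1 : y ≠ 1 := by rintro rfl; exact hy (Subgroup.one_mem _)
  have hxG : orderOf (x : G) = 2 := by rw [Subgroup.orderOf_coe, hx]
  have hyd : orderOf (y : G) ∣ 4 := by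
    rw [Subgroup.orderOf_coe]
    have := orderOf_dvd_natCard y
    rwa [hV] at this
  have hxy : (x : G) * y = y * x := by
    have := hcomm.is_comm.comm x y
    exact congrArg Subtype.val this
  have hcop : (orderOf (y : G)).Coprime (orderOf c) := by
    rw [hc]; exact Nat.Coprime.coprime_dvd_left hyd (by norm_num)
  have ho := (show Commute (y : G) c from hz y).orderOf_mul_eq_mul_orderOf_of_coprime hcop
  rw [hc] at ho
  have h12 := g.ord ((y : G) * c)
  have hy4 := g.ord (y : G)
  have hyo : orderOf (y : G) ≠ 1 := by
    rw [Ne, orderOf_eq_one_iff]; exact_mod_cast hy1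
  rcases hy4 with e | e | e | e | e
  · exact hyo e
  · exact g.L1 hxG e (by exact_mod_cast hyx.symm) hxy hc (hz _) (hz _)
  · rw [e] at hyd; norm_num at hyd
  · rw [e] at ho; omega
  · rw [e] at hyd; norm_num at hyd

lemma Good.L1n (g : Good ρ) {c : G} (hc : orderOf c = 3) [(Subgroup.zpowers c).Normal] :
    ¬ (4 ∣ Nat.card (Subgroup.centralizer {c})) := by
  intro h
  have hm : c ∈ Subgroup.centralizer {c} := Subgroup.mem_centralizer_singleton_iff.2 rfl
  refine (g.sub (Subgroup.centralizer {c})).L1c (c := ⟨c, hm⟩) ?_ ?_ h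
  · rw [Subgroup.orderOf_mk, hc]
  · rintro ⟨x, hx⟩
    exact Subtype.ext (Subgroup.mem_centralizer_singleton_iff.1 hx)

lemma cent_idx {c : G} (hc : orderOf c = 3) [(Subgroup.zpowers c).Normal] :
    (Subgroup.centralizer {c}).index = 1 ∨ (Subgroup.centralizer {c}).index = 2 := by
  by_cases h : ∃ a, a ∉ Subgroup.centralizer {c}
  · right
    obtain ⟨a, ha⟩ := h
    rw [Subgroup.index_eq_two_iff_exists_notMem_and]
    refine ⟨a, ha, fun b => ?_⟩
    simp only [Subgroup.mem_centralizer_singleton_iff] at ha ⊢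
    have h1 := (conj_of 3 (by simp) hc a).resolve_left ha
    rcases conj_of 3 (by simp) hc b with h2 | h2
    · exact Or.inr h2
    · left
      have h3 : b * c⁻¹ = c * b := by
        rw [mul_inv_eq_iff_eq_mul, mul_assoc, h2, mul_inv_cancel_left]
      rw [mul_assoc, h1, ← mul_assoc, h3, mul_assoc]
  · left
    push Not at h
    rw [Subgroup.index_eq_one]
    ext x; simp [h x]

lemma embed4 {X : Type*} (hX : Nat.card X = 4) (f : G →* Equiv.Perm X) (hf : Function.Injective f) :
    ∃ f' : G →* Equiv.Perm (Fin 4), Function.Injective f' := by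
  have e : X ≃ Fin 4 := by
    have := Nat.finite_of_card_ne_zero (α := X) (by rw [hX]; norm_num)
    exact (Finite.equivFinOfCardEq hX)
  exact ⟨(Equiv.permCongrHom e).toMonoidHom.comp f, (Equiv.permCongrHom e).injective.comp hf⟩

lemma card_perm4 : Nat.card (Equiv.Perm (Fin 4)) = 24 := by
  rw [Nat.card_perm]; simp; rfl

lemma case12 (h : Nat.card G = 12) (g : Good ρ) :
    Nonempty (G ≃* DihedralGroup 6) ∨ Nonempty (G ≃* alternatingGroup (Fin 4)) := by
  obtain ⟨c, hc⟩ := exists_prime_orderOf_dvd_card' (G := G) (hp := ⟨Nat.prime_three⟩) 3 (by rw [h]; norm_num)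
  by_cases hN : (Subgroup.zpowers c).Normal
  · left
    have hcard := (Subgroup.centralizer {c}).index_mul_card
    have h4 := g.L1n hc
    rw [h] at hcard
    rcases cent_idx hc with hi | hi
    · rw [hi, one_mul] at hcard
      rw [hcard] at h4; norm_num at h4
    rw [hi] at hcard
    have hC : Nat.card (Subgroup.centralizer {c}) = 6 := by omega
    obtain ⟨⟨t, htC⟩, ht⟩ := exists_prime_orderOf_dvd_card' (G := Subgroup.centralizer {c})
      (hp := ⟨Nat.prime_two⟩) 2 (by rw [hC]; norm_num)
    rw [Subgroup.orderOf_mk] at ht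
    have htc := Subgroup.mem_centralizer_singleton_iff.1 htC
    have hr : orderOf (t * c) = 6 := six_of ht hc htc
    have hmem : t * c ∈ Subgroup.centralizer {c} := Subgroup.mul_mem _ htC (Subgroup.mem_centralizer_singleton_iff.2 rfl)
    have hcr : (t * c) ^ 4 = c := by
      have htt : t ^ 4 = 1 := by
        rw [← orderOf_dvd_iff_pow_eq_one, ht]; norm_num
      have hcc : c ^ 3 = 1 := by rw [← orderOf_dvd_iff_pow_eq_one, hc]
      rw [(show Commute t c from htc).mul_pow, htt, pow_succ, hcc, one_mul, one_mul]
    set r := t * c with hrdef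
    have hri := idx_zp 6 hr 2 (by rw [h]) (by norm_num)
    have hrN := Subgroup.normal_of_index_eq_two hri
    obtain ⟨s, hs⟩ := ex_notMem _ hi
    have hsr : s ∉ Subgroup.zpowers r := fun hh => hs ((Subgroup.zpowers_le.2 hmem) hh)
    have hinv : s * r = r⁻¹ * s := by
      refine (conj_of 6 (by simp) hr s).resolve_left fun hh => hs ?_
      rw [Subgroup.mem_centralizer_singleton_iff, ← hcr]
      exact (show Commute s r from hh).pow_right 4
    have hss := Subgroup.mul_self_mem_of_index_two hri s
    obtain ⟨k, hk, hk'⟩ := mem_zp 6 hr hss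
    have hs4 : s * s * (s * s) = 1 := by
      have e1 : s * r ^ k = (r ^ k)⁻¹ * s := by
        rw [← inv_pow, ← mul_inv_eq_iff_eq_mul, ← conj_pow, hinv, mul_inv_cancel_right]
      rw [← hk'] at e1
      have e2 : s * (s * s) = s * s * s := (mul_assoc _ _ _).symm
      rw [e2] at e1
      have e3 := mul_right_cancel e1
      nth_rewrite 1 [e3]
      exact inv_mul_cancel _
    have h1s : s ≠ 1 := fun e => hs (e ▸ Subgroup.one_mem _)
    by_cases h2 : s * s = 1
    · exact dihedral_of (by rw [h]) hr hsr h2 hinv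
    · exfalso
      have hss2 := two_of_sq hs4 h2
      refine g.noquat hinv (four_of hss2) (Or.inr ⟨hr, ?_⟩)
      rw [hk', orderOf_pow, hr] at hss2
      interval_cases k <;> simp at hss2
      rw [hk', pow_succ, pow_two]
  · right
    have hcore : (Subgroup.zpowers c).normalCore = ⊥ := by
      have hle := (Subgroup.zpowers c).normalCore_le
      have hd := Subgroup.card_dvd_of_le hle
      rw [Nat.card_zpowers, hc] at hd
      rcases (Nat.dvd_prime Nat.prime_three).1 hd with e | e
      · exact Subgroup.card_eq_one.1 e
      · exfalso; apply hN
        rw [← Subgroup.eq_of_le_of_card_ge hle (by rw [Nat.card_zpowers, hc, e])]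
        infer_instance
    rw [Subgroup.normalCore_eq_ker, MonoidHom.ker_eq_bot_iff] at hcore
    obtain ⟨f, hf⟩ := embed4 (X := G ⧸ Subgroup.zpowers c) (idx_zp 3 hc 4 (by rw [h]) (by norm_num)) _ hcore
    have hrc : Nat.card f.range = 12 := by
      rw [← h]; exact (Nat.card_congr (MonoidHom.ofInjective hf).toEquiv).symm
    have hri : f.range.index = 2 := by
      have := f.range.index_mul_card
      rw [hrc, card_perm4] at this
      omega
    have := Equiv.Perm.eq_alternatingGroup_of_index_eq_two hri
    exact ⟨(MonoidHom.ofInjective hf).trans (MulEquiv.subgroupCongr this)⟩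

lemma Good.Z (h : Nat.card G = 24) (g : Good ρ) {z : G} (hz : orderOf z = 2)
    (hc : ∀ x, z * x = x * z) : False := by
  have hzz := sq_of_two hz
  have h36 : cnt G 3 = cnt G 6 := by
    unfold cnt
    refine Nat.card_congr ⟨fun x => ⟨z * x.1, six_of hz x.2 (hc _)⟩, fun x => ⟨z * x.1, ?_⟩, ?_, ?_⟩
    · obtain ⟨y, hy⟩ := x
      have h2 : orderOf (y ^ 2) = 3 := by rw [orderOf_pow, hy]; norm_num
      have h3 : orderOf (y ^ 3) = 2 := by rw [orderOf_pow, hy]; norm_num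
      have h4 : orderOf (y ^ 4) = 3 := by rw [orderOf_pow, hy]; norm_num
      have : z = y ^ 3 := by
        by_contra hne
        exact g.L1 hz h3 hne (hc _) h2 (hc _) (by rw [← pow_add, ← pow_add])
      show orderOf (z * y) = 3
      rw [this, ← pow_succ, h4]
    · intro x; exact Subtype.ext (by simp [← mul_assoc, hzz])
    · intro x; exact Subtype.ext (by simp [← mul_assoc, hzz])
  obtain ⟨c1, ⟨k, c2⟩, ⟨m, c3⟩⟩ := g.count
  rw [h] at c1 c2 c3
  rw [h36] at c1
  have h1 : cnt G 2 = 1 := by omega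
  have : Fact (Nat.Prime 2) := ⟨Nat.prime_two⟩
  obtain ⟨P, hP⟩ := Sylow.exists_subgroup_card_pow_prime (G := G) (n := 3) 2
    (by rw [h]; norm_num)
  obtain ⟨r, s, hr, hs, hss, -⟩ := case8 hP (g.sub P)
  have hr2 := four_sq hr
  have hs2 : orderOf s = 2 := two_of_sq hss (fun e => hs (e ▸ Subgroup.one_mem _))
  rw [← Subgroup.orderOf_coe] at hr2 hs2
  have := (Nat.card_eq_one_iff_unique.1 h1).1
  have e := Subsingleton.elim (⟨_, hr2⟩ : {g : G // orderOf g = 2}) ⟨_, hs2⟩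
  rw [Subtype.mk.injEq] at e
  have e : r * r = s := Subtype.ext e
  exact hs (e ▸ Subgroup.mul_mem _ (Subgroup.mem_zpowers r) (Subgroup.mem_zpowers r))

lemma case24 (h : Nat.card G = 24) (g : Good ρ) : Nonempty (G ≃* Equiv.Perm (Fin 4)) := by
  have : Fact (Nat.Prime 3) := ⟨Nat.prime_three⟩
  have hP3 : ∀ P : Sylow 3 G, Nat.card P = 3 := by
    intro P
    obtain ⟨n, hn⟩ := IsPGroup.iff_card.1 P.2
    have hd := Subgroup.card_subgroup_dvd_card (P : Subgroup G)
    have h3 := P.dvd_card_of_dvd_card (p := 3) (by rw [h]; norm_num)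
    have hn' : Nat.card P = 3 ^ n := hn
    rw [hn, h] at hd
    rw [hn'] at h3 ⊢
    have h9 : n < 2 := by
      by_contra hh
      have := (pow_dvd_pow 3 (not_lt.1 hh)).trans hd
      norm_num at this
    interval_cases n
    · norm_num at h3
    · rfl
  have hidx : ∀ P : Sylow 3 G, (P : Subgroup G).index = 8 := by
    intro P
    have := (P : Subgroup G).index_mul_card
    have h3 : Nat.card (P : Subgroup G) = 3 := hP3 P
    rw [h3, h] at this
    omega
  obtain ⟨P⟩ : Nonempty (Sylow 3 G) := inferInstance
  have hd := P.card_dvd_index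
  rw [hidx] at hd
  have hm := card_sylow_modEq_one 3 G
  have h14 : Nat.card (Sylow 3 G) = 1 ∨ Nat.card (Sylow 3 G) = 4 := by
    have := Nat.le_of_dvd (by norm_num) hd
    unfold Nat.ModEq at hm
    interval_cases Nat.card (Sylow 3 G) <;> simp_all
  have hN4 : Nat.card (Sylow 3 G) = 4 := by
    refine h14.resolve_left fun h1 => ?_
    have := (Nat.card_eq_one_iff_unique.1 h1).1
    have hPN := Sylow.normal_of_subsingleton P
    obtain ⟨c, hc⟩ := exists_prime_orderOf_dvd_card' (G := P) 3 (by rw [hP3])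
    have hcG : orderOf (c : G) = 3 := by
      exact (Subgroup.orderOf_coe (H := (P : Subgroup G)) c).trans hc
    have hz : Subgroup.zpowers (c : G) = P := Subgroup.eq_of_le_of_card_ge
      (Subgroup.zpowers_le.2 c.2) (by rw [Nat.card_zpowers, hcG]; exact (hP3 P).le)
    have hzN : (Subgroup.zpowers (c : G)).Normal := by rw [hz]; exact hPN
    apply g.L1n hcG
    have hcard := (Subgroup.centralizer {(c : G)}).index_mul_card
    rw [h] at hcard
    rcases cent_idx hcG with hi | hi <;> rw [hi] at hcard <;> omega
  set f := MulAction.toPermHom G (Sylow 3 G) with hf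
  have hfix : ∀ k ∈ f.ker, ∀ Q : Sylow 3 G, k • Q = Q := by
    intro k hk Q
    have := MonoidHom.mem_ker.1 hk
    exact congrArg (fun (p : Equiv.Perm (Sylow 3 G)) => p Q) this
  have hK3 : ¬ 3 ∣ Nat.card f.ker := by
    intro hh
    obtain ⟨⟨k, hk⟩, hko⟩ := exists_prime_orderOf_dvd_card' (G := f.ker) 3 hh
    rw [Subgroup.orderOf_mk] at hko
    have hp : IsPGroup 3 (Subgroup.zpowers k) :=
      IsPGroup.of_card (n := 1) (by rw [Nat.card_zpowers, hko]; rfl)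
    have hall : ∀ Q : Sylow 3 G, Subgroup.zpowers k = Q := by
      intro Q
      refine Subgroup.eq_of_le_of_card_ge (hp.sylow_mem_fixedPoints_iff.1 ?_) ?_
      · rintro ⟨x, hx⟩
        exact hfix x ((Subgroup.zpowers_le.2 hk) hx) Q
      · rw [Nat.card_zpowers, hko]; exact (hP3 Q).le
    have : Subsingleton (Sylow 3 G) := ⟨fun Q R => Sylow.ext ((hall Q).symm.trans (hall R))⟩
    have := Nat.card_of_subsingleton P
    omega
  have hKle : f.ker ≤ Subgroup.normalizer (P : Set G) := by
    refine (Subgroup.sylow_mem_fixedPoints_iff _).1 ?_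
    rintro ⟨x, hx⟩
    exact hfix x hx P
  have hKd : Nat.card f.ker ∣ 6 := by
    have h1 := Subgroup.card_dvd_of_le hKle
    have h2 := P.card_eq_index_normalizer
    have h3 := (Subgroup.normalizer (P : Set G)).index_mul_card
    rw [← h2, hN4, h] at h3
    have : Nat.card (Subgroup.normalizer (P : Set G)) = 6 := by omega
    rwa [this] at h1
  have hK12 : Nat.card f.ker = 1 ∨ Nat.card f.ker = 2 := by
    have := Nat.le_of_dvd (by norm_num) hKd
    interval_cases Nat.card f.ker <;> simp_all
  have hbot : f.ker = ⊥ := by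
    rcases hK12 with e | e
    · exact Subgroup.card_eq_one.1 e
    · exfalso
      obtain ⟨⟨z, hzK⟩, hz⟩ := exists_prime_orderOf_dvd_card' (G := f.ker) (hp := ⟨Nat.prime_two⟩) 2 (by rw [e])
      rw [Subgroup.orderOf_mk] at hz
      have hzp : Subgroup.zpowers z = f.ker := Subgroup.eq_of_le_of_card_ge
        (Subgroup.zpowers_le.2 hzK) (by rw [Nat.card_zpowers, hz, e])
      refine g.Z h hz fun x => ?_
      have hx : x * z * x⁻¹ ∈ f.ker := (MonoidHom.normal_ker f).conj_mem z hzK x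
      rw [← hzp] at hx
      obtain ⟨k, hk, hk'⟩ := mem_zp 2 hz hx
      interval_cases k
      · rw [pow_zero, conj_eq_one_iff] at hk'
        rw [hk', orderOf_one] at hz; norm_num at hz
      · rw [pow_one, mul_inv_eq_iff_eq_mul] at hk'; exact hk'.symm
  rw [MonoidHom.ker_eq_bot_iff] at hbot
  obtain ⟨f', hf'⟩ := embed4 hN4 f hbot
  have hb : Function.Bijective f' := by
    rw [Nat.bijective_iff_injective_and_card]
    exact ⟨hf', by rw [h, card_perm4]⟩
  exact ⟨MulEquiv.ofBijective f' hb⟩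
end

theorem stmt2 (H : Subgroup (Matrix.SpecialLinearGroup (Fin 3) ℤ))
    (hfin : Finite H) (hnt : H ≠ ⊥) :
    Nonempty (H ≃* Multiplicative (ZMod 2)) ∨
    Nonempty (H ≃* Multiplicative (ZMod 3)) ∨
    Nonempty (H ≃* Multiplicative (ZMod 4)) ∨
    Nonempty (H ≃* Multiplicative (ZMod 6)) ∨
    Nonempty (H ≃* DihedralGroup 2) ∨
    Nonempty (H ≃* DihedralGroup 3) ∨
    Nonempty (H ≃* DihedralGroup 4) ∨
    Nonempty (H ≃* DihedralGroup 6) ∨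
    Nonempty (H ≃* alternatingGroup (Fin 4)) ∨
    Nonempty (H ≃* Equiv.Perm (Fin 4)) := by
  let ι : H →* Matrix (Fin 3) (Fin 3) ℤ :=
    { toFun := fun h => (h : Matrix.SpecialLinearGroup (Fin 3) ℤ).1
      map_one' := rfl
      map_mul' := fun _ _ => rfl }
  have hι : Function.Injective ι := fun a b hab => Subtype.ext (Subtype.ext hab)
  let ρ : H →* Mat3 := ((Int.castRingHom ℚ).mapMatrix (m := Fin 3)).toMonoidHom.comp ι
  have g : Good ρ := by
    intro x
    have h1 := elt_cls (ι x) (orderOf x) (orderOf_pos x)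
      (by rw [← map_pow, pow_orderOf_eq_one, map_one]) (x : Matrix.SpecialLinearGroup (Fin 3) ℤ).2
    rw [orderOf_injective ι hι] at h1
    have h2 : (ρ x).trace = ((ι x).trace : ℚ) := by
      simp [ρ, Matrix.trace]
    rw [h2]; exact h1
  have hd := g.card_dvd
  have hle := Nat.le_of_dvd (by norm_num) hd
  have hne : Nat.card H ≠ 1 := fun e => hnt (Subgroup.card_eq_one.1 e)
  have hcases : Nat.card H = 2 ∨ Nat.card H = 3 ∨ Nat.card H = 4 ∨ Nat.card H = 6 ∨
      Nat.card H = 8 ∨ Nat.card H = 12 ∨ Nat.card H = 24 := by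
    generalize Nat.card H = n at *
    interval_cases n <;> simp_all
  rcases hcases with e | e | e | e | e | e | e
  · obtain ⟨r, hr⟩ := exists_prime_orderOf_dvd_card' (G := H) (hp := ⟨Nat.prime_two⟩) 2 (by rw [e])
    have := cyclic_of e hr
    tauto
  · obtain ⟨r, hr⟩ := exists_prime_orderOf_dvd_card' (G := H) (hp := ⟨Nat.prime_three⟩) 3 (by rw [e])
    have := cyclic_of e hr
    tauto
  · have := case4 e g
    tauto
  · have := case6 e
    tauto
  · obtain ⟨r, s, hr, hs, hss, hrs⟩ := case8 e g
    have := dihedral_of (by rw [e]) hr hs hss hrs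
    tauto
  · have := case12 e g
    tauto
  · have := case24 e g
    tauto
end

section
/- Each of the following groups admits an injective group homomorphism into SL(3,ℤ): the cyclic groups ℤ/2, ℤ/3, ℤ/4, ℤ/6; the dihedral groups D₄, D₆, D₈, D₁₂ of orders 4, 6, 8, 12 respectively; the alternating group A₄; and the symmetric group S₄. -/
lemma lift_SL {G : Type*} [Group G] (f : G → Matrix (Fin 3) (Fin 3) ℤ)
    (h1 : f 1 = 1) (hm : ∀ a b, f (a * b) = f a * f b) (hd : ∀ a, (f a).det = 1)
    (hi : ∀ a, f a = 1 → a = 1) :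
    ∃ f : G →* Matrix.SpecialLinearGroup (Fin 3) ℤ, Function.Injective f := by
  refine ⟨⟨⟨fun a => ⟨f a, hd a⟩, Subtype.ext h1⟩, fun a b => Subtype.ext (hm a b)⟩, ?_⟩
  rw [injective_iff_map_eq_one]
  intro a ha
  exact hi a (congrArg Subtype.val ha)

lemma comp_SL {G H : Type*} [Group G] [Group H] (g : H →* G) (hg : Function.Injective g)
    (h : ∃ f : G →* Matrix.SpecialLinearGroup (Fin 3) ℤ, Function.Injective f) :
    ∃ f : H →* Matrix.SpecialLinearGroup (Fin 3) ℤ, Function.Injective f := by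
  obtain ⟨f, hf⟩ := h
  exact ⟨f.comp g, hf.comp hg⟩

/-- Rotation subgroup of the dihedral group. -/
def rotHom (n : ℕ) : Multiplicative (ZMod n) →* DihedralGroup n where
  toFun a := DihedralGroup.r a.toAdd
  map_one' := rfl
  map_mul' _ _ := by simp

lemma rotHom_inj (n : ℕ) : Function.Injective (rotHom n) := by
  intro a b h
  exact Multiplicative.toAdd.injective (DihedralGroup.r.inj h)

/-- Candidate representation of the dihedral group. -/
def dihFun (n : ℕ) (R S : Matrix (Fin 3) (Fin 3) ℤ) : DihedralGroup n → Matrix (Fin 3) (Fin 3) ℤ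
  | .r i => R ^ i.val
  | .sr i => S * R ^ i.val

lemma dih_SL (n : ℕ) [NeZero n] (R S : Matrix (Fin 3) (Fin 3) ℤ) (hR : R ^ n = 1) (hS : S * S = 1)
    (hRS : R * S * R = S) (dR : R.det = 1) (dS : S.det = 1)
    (hi : ∀ i : Fin n, R ^ i.val = 1 → i.val = 0) (hs : ∀ i : Fin n, S * R ^ i.val ≠ 1) :
    ∃ f : DihedralGroup n →* Matrix.SpecialLinearGroup (Fin 3) ℤ, Function.Injective f := by
  have hmod : ∀ k : ℕ, R ^ (k % n) = R ^ k := fun k => (pow_eq_pow_mod k hR).symm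
  have hadd : ∀ i j : ZMod n, R ^ (i + j).val = R ^ i.val * R ^ j.val := by
    intro i j
    rw [ZMod.val_add, hmod, pow_add]
  have hk : ∀ k : ℕ, R ^ k * S * R ^ k = S := by
    intro k
    induction k with
    | zero => simp
    | succ k ih =>
      calc R ^ (k+1) * S * R ^ (k+1) = R ^ k * (R * S * R) * R ^ k := by
            rw [pow_succ]; nth_rewrite 2 [← pow_succ]; rw [pow_succ']; simp only [mul_assoc]
        _ = S := by rw [hRS, ih]
  have hsub : ∀ i j : ZMod n, S * R ^ (j - i).val = R ^ i.val * (S * R ^ j.val) := by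
    intro i j
    have : R ^ j.val = R ^ i.val * R ^ (j - i).val := by rw [← hadd]; congr 2; ring
    rw [this, ← mul_assoc, ← mul_assoc, hk]
  refine lift_SL (dihFun n R S) ?_ ?_ ?_ ?_
  · change R ^ (0 : ZMod n).val = 1
    simp
  · rintro (i | i) (j | j)
    · exact hadd i j
    · exact hsub i j
    · change S * R ^ (i + j).val = S * R ^ i.val * R ^ j.val
      rw [hadd, mul_assoc]
    · change R ^ (j - i).val = S * R ^ i.val * (S * R ^ j.val)
      rw [mul_assoc, ← hsub, ← mul_assoc, hS, one_mul]
  · rintro (i | i)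
    · change (R ^ i.val).det = 1
      simp [dR]
    · change (S * R ^ i.val).det = 1
      simp [dR, dS]
  · rintro (i | i) h
    · have := hi ⟨i.val, ZMod.val_lt i⟩ h
      have : i = 0 := (ZMod.val_eq_zero i).1 this
      rw [this]; rfl
    · exact absurd h (hs ⟨i.val, ZMod.val_lt i⟩)

lemma dih2 : ∃ f : DihedralGroup 2 →* Matrix.SpecialLinearGroup (Fin 3) ℤ,
    Function.Injective f :=
  dih_SL 2 !![-1,0,0;0,-1,0;0,0,1] !![0,1,0;1,0,0;0,0,-1] (by decide) (by decide) (by decide)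
    (by decide) (by decide) (by decide) (by decide)

lemma dih3 : ∃ f : DihedralGroup 3 →* Matrix.SpecialLinearGroup (Fin 3) ℤ,
    Function.Injective f :=
  dih_SL 3 !![-1,-1,0;1,0,0;0,0,1] !![0,1,0;1,0,0;0,0,-1] (by decide) (by decide) (by decide)
    (by decide) (by decide) (by decide) (by decide)

lemma dih4 : ∃ f : DihedralGroup 4 →* Matrix.SpecialLinearGroup (Fin 3) ℤ,
    Function.Injective f :=
  dih_SL 4 !![0,-1,0;1,0,0;0,0,1] !![0,1,0;1,0,0;0,0,-1] (by decide) (by decide) (by decide)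
    (by decide) (by decide) (by decide) (by decide)

lemma dih6 : ∃ f : DihedralGroup 6 →* Matrix.SpecialLinearGroup (Fin 3) ℤ,
    Function.Injective f :=
  dih_SL 6 !![0,-1,0;1,1,0;0,0,1] !![0,1,0;1,0,0;0,0,-1] (by decide +kernel) (by decide)
    (by decide) (by decide) (by decide) (by decide +kernel) (by decide +kernel)

/-- The standard representation of `S₄` twisted by the sign. -/
def stdFun (σ : Equiv.Perm (Fin 4)) : Matrix (Fin 3) (Fin 3) ℤ :=
  Matrix.of fun i j => (Equiv.Perm.sign σ : ℤ) *
    ((if i.castSucc = σ j.castSucc then 1 else 0) - (if i.castSucc = σ 3 then 1 else 0))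

lemma s4 : ∃ f : Equiv.Perm (Fin 4) →* Matrix.SpecialLinearGroup (Fin 3) ℤ,
    Function.Injective f :=
  lift_SL stdFun (by decide +kernel) (by decide +kernel) (by decide +kernel) (by decide +kernel)


/-- Each of the groups `ℤ/2, ℤ/3, ℤ/4, ℤ/6`, the dihedral groups `D₄, D₆, D₈, D₁₂`
(of orders `4, 6, 8, 12`), the alternating group `A₄` and the symmetric group `S₄`
admits an injective group homomorphism into `SL(3,ℤ)`. -/
theorem stmt3 :
    (∃ f : Multiplicative (ZMod 2) →* Matrix.SpecialLinearGroup (Fin 3) ℤ,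
      Function.Injective f) ∧
    (∃ f : Multiplicative (ZMod 3) →* Matrix.SpecialLinearGroup (Fin 3) ℤ,
      Function.Injective f) ∧
    (∃ f : Multiplicative (ZMod 4) →* Matrix.SpecialLinearGroup (Fin 3) ℤ,
      Function.Injective f) ∧
    (∃ f : Multiplicative (ZMod 6) →* Matrix.SpecialLinearGroup (Fin 3) ℤ,
      Function.Injective f) ∧
    (∃ f : DihedralGroup 2 →* Matrix.SpecialLinearGroup (Fin 3) ℤ,
      Function.Injective f) ∧
    (∃ f : DihedralGroup 3 →* Matrix.SpecialLinearGroup (Fin 3) ℤ,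
      Function.Injective f) ∧
    (∃ f : DihedralGroup 4 →* Matrix.SpecialLinearGroup (Fin 3) ℤ,
      Function.Injective f) ∧
    (∃ f : DihedralGroup 6 →* Matrix.SpecialLinearGroup (Fin 3) ℤ,
      Function.Injective f) ∧
    (∃ f : alternatingGroup (Fin 4) →* Matrix.SpecialLinearGroup (Fin 3) ℤ,
      Function.Injective f) ∧
    (∃ f : Equiv.Perm (Fin 4) →* Matrix.SpecialLinearGroup (Fin 3) ℤ,
      Function.Injective f) := by
  exact ⟨comp_SL _ (rotHom_inj 2) dih2, comp_SL _ (rotHom_inj 3) dih3,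
    comp_SL _ (rotHom_inj 4) dih4, comp_SL _ (rotHom_inj 6) dih6, dih2, dih3, dih4, dih6,
    comp_SL (alternatingGroup (Fin 4)).subtype (Subgroup.subtype_injective _) s4, s4⟩
end

section
/- Every element of SL(3,ℤ) of finite order has order 1, 2, 3, 4, or 6. -/
lemma aux_pow {R : Type*} [Ring R] (N : R) (n : ℕ) :
    ∃ K : R, (1 + N) ^ n = 1 + (n : R) * N + N * N * K := by
  induction n with
  | zero => exact ⟨0, by simp⟩
  | succ n ih =>
    obtain ⟨K, hK⟩ := ih
    refine ⟨(n : R) + K + N * K, ?_⟩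
    have hc : N * (n : R) = (n : R) * N := (Nat.cast_commute n N).eq.symm
    have hc2 : N * ((n : R) * N) = N * N * (n : R) := by
      rw [mul_assoc, hc]
    rw [pow_succ', hK]
    push_cast
    simp only [mul_add, add_mul, one_mul, mul_one, hc2, mul_assoc]
    abel

lemma aux_unip (A : Matrix (Fin 3) (Fin 3) ℤ) (n : ℕ) (hn : n ≠ 0) (h : A ^ n = 1)
    (h3 : (A - 1) * (A - 1) * (A - 1) = 0) : A = 1 := by
  have key : ∀ B : Matrix (Fin 3) (Fin 3) ℤ, (n : Matrix (Fin 3) (Fin 3) ℤ) * B = 0 → B = 0 := by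
    intro B hB
    rw [← nsmul_eq_mul] at hB
    ext i j
    have := congrFun (congrFun hB i) j
    simpa [hn] using this
  obtain ⟨K, hK⟩ := aux_pow (A - 1) n
  set N := A - 1 with hN
  have hA : 1 + N = A := by rw [hN]; abel
  rw [hA, h] at hK
  have h0 : (n : Matrix (Fin 3) (Fin 3) ℤ) * N + N * N * K = 0 := by
    have := hK.symm
    rw [add_assoc] at this
    simpa using this
  have h1 : N * N = 0 := by
    apply key
    have h2 := congrArg (fun X => N * X) h0
    have hc : N * (n : Matrix (Fin 3) (Fin 3) ℤ) = (n : Matrix (Fin 3) (Fin 3) ℤ) * N :=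
      (Nat.cast_commute n N).eq.symm
    simp only [mul_add, mul_zero, ← mul_assoc, h3, zero_mul, add_zero, hc] at h2
    rw [← mul_assoc]; exact h2
  rw [h1, zero_mul, add_zero] at h0
  rw [← hA, key N h0, add_zero]

def aux_s (A : Matrix (Fin 3) (Fin 3) ℤ) : ℤ :=
  A 0 0 * A 1 1 - A 0 1 * A 1 0 + A 0 0 * A 2 2 - A 0 2 * A 2 0 + A 1 1 * A 2 2 - A 1 2 * A 2 1

def aux_t (A : Matrix (Fin 3) (Fin 3) ℤ) : ℤ := A 0 0 + A 1 1 + A 2 2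

lemma aux_ch (A : Matrix (Fin 3) (Fin 3) ℤ) :
    A * A * A = aux_t A • (A * A) - aux_s A • A + A.det • 1 := by
  have h := Matrix.aeval_self_charpoly A
  have hc : A.charpoly = Polynomial.X ^ 3 - Polynomial.C (aux_t A) * Polynomial.X ^ 2
      + Polynomial.C (aux_s A) * Polynomial.X - Polynomial.C A.det := by
    simp only [Matrix.charpoly, Matrix.det_fin_three, aux_s, aux_t, Matrix.charmatrix_apply]
    simp
    ring
  rw [hc] at h
  simp only [map_sub, map_add, map_mul, map_pow, Polynomial.aeval_X, Polynomial.aeval_C,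
    ← Algebra.smul_def, Algebra.algebraMap_eq_smul_one] at h
  rw [smul_mul_assoc, smul_mul_assoc, one_mul, one_mul, pow_succ, pow_two] at h
  rw [← sub_eq_zero, ← h]
  abel

lemma aux_root (A : Matrix (Fin 3) (Fin 3) ℤ) (hd : A.det = 1) (n : ℕ) (h : A ^ n = 1) (x : ℝ)
    (hx : x ^ 3 - aux_t A * x ^ 2 + aux_s A * x - 1 = 0) : x ^ n = 1 := by
  set B : Matrix (Fin 3) (Fin 3) ℝ := A.map (Int.castRingHom ℝ) with hB
  have hBn : B ^ n = 1 := by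
    rw [hB, ← Matrix.map_pow, h]; simp
  have hdet : (B - x • (1 : Matrix (Fin 3) (Fin 3) ℝ)).det = 0 := by
    have hd' : ((A.det : ℤ) : ℝ) = 1 := by rw [hd]; simp
    rw [Matrix.det_fin_three] at hd' ⊢
    simp only [aux_s, aux_t] at hx
    push_cast at hx hd'
    simp [hB]
    linear_combination hd' - hx
  obtain ⟨v, hv, hv0⟩ := Matrix.exists_mulVec_eq_zero_iff.mpr hdet
  have hBv : B.mulVec v = x • v := by
    rw [Matrix.sub_mulVec, Matrix.smul_mulVec, Matrix.one_mulVec] at hv0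
    exact sub_eq_zero.mp hv0
  have hp : ∀ k : ℕ, (B ^ k).mulVec v = x ^ k • v := by
    intro k
    induction k with
    | zero => simp
    | succ k ih =>
      rw [pow_succ, ← Matrix.mulVec_mulVec, hBv, Matrix.mulVec_smul, ih, smul_smul, pow_succ']
  have h1 := hp n
  rw [hBn, Matrix.one_mulVec] at h1
  have : (x ^ n - 1) • v = 0 := by rw [sub_smul, one_smul, ← h1, sub_self]
  have := (smul_eq_zero.mp this).resolve_right hv
  linarith

/-- Every element of `SL(3,ℤ)` of finite order has order `1, 2, 3, 4`, or `6`. -/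
theorem stmt4 (M : Matrix.SpecialLinearGroup (Fin 3) ℤ) (hfin : IsOfFinOrder M) :
    orderOf M = 1 ∨ orderOf M = 2 ∨ orderOf M = 3 ∨ orderOf M = 4 ∨ orderOf M = 6 := by
  suffices hmain : M ^ 4 = 1 ∨ M ^ 6 = 1 by
    rcases hmain with h | h
    · have h1 := orderOf_dvd_of_pow_eq_one h
      have h2 := Nat.le_of_dvd (by norm_num) h1
      interval_cases orderOf M <;> simp_all
    · have h1 := orderOf_dvd_of_pow_eq_one h
      have h2 := Nat.le_of_dvd (by norm_num) h1
      interval_cases orderOf M <;> simp_all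
  obtain ⟨n, hn, hMn⟩ := isOfFinOrder_iff_pow_eq_one.mp hfin
  have hpow : ∀ k : ℕ, M ^ k = 1 ↔ (M : Matrix (Fin 3) (Fin 3) ℤ) ^ k = 1 := by
    intro k
    rw [← Matrix.SpecialLinearGroup.coe_pow, ← Matrix.SpecialLinearGroup.coe_one]
    exact Subtype.ext_iff
  rw [hpow, hpow]
  rw [hpow] at hMn
  have hd : (M : Matrix (Fin 3) (Fin 3) ℤ).det = 1 := M.2
  generalize (M : Matrix (Fin 3) (Fin 3) ℤ) = A at *
  have hroot := aux_root A hd n hMn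
  have hch := aux_ch A
  rw [hd, one_smul] at hch
  generalize aux_t A = t at *
  generalize aux_s A = s at *
  have habs : ∀ x : ℝ, (x ^ 3 - t * x ^ 2 + s * x - 1 = 0) → |x| = 1 := by
    intro x hx
    have h1 := hroot x hx
    have : |x| ^ n = 1 := by rw [← abs_pow, h1, abs_one]
    exact (pow_eq_one_iff_of_nonneg (abs_nonneg x) hn.ne').mp this
  have hcont : Continuous (fun x : ℝ => x ^ 3 - t * x ^ 2 + s * x - 1) := by fun_prop
  have hts : t = s := by
    set c : ℝ := 1 + |(t : ℝ)| + |(s : ℝ)| with hc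
    have t0 := abs_nonneg (t : ℝ)
    have s0 := abs_nonneg (s : ℝ)
    have t1 := le_abs_self (t : ℝ)
    have s1 := neg_abs_le (s : ℝ)
    have c1 : 1 ≤ c := by linarith
    have hfc : (0 : ℝ) ≤ c ^ 3 - t * c ^ 2 + s * c - 1 := by
      have e : c ^ 3 = (1 + |(t : ℝ)| + |(s : ℝ)|) * c ^ 2 := by rw [← hc]; ring
      have i1 : 0 ≤ (|(t : ℝ)| - t) * c ^ 2 := mul_nonneg (by linarith) (by positivity)
      have i2 : 0 ≤ (s + |(s : ℝ)|) * c := mul_nonneg (by linarith) (by linarith)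
      have i3 : 0 ≤ |(s : ℝ)| * (c * (c - 1)) :=
        mul_nonneg s0 (mul_nonneg (by linarith) (by linarith))
      nlinarith
    obtain ⟨x, hx, hfx⟩ := intermediate_value_Icc (by linarith : (0 : ℝ) ≤ c)
      hcont.continuousOn (show (0 : ℝ) ∈ _ from ⟨by norm_num, hfc⟩)
    have hx1 := habs x hfx
    rw [abs_of_nonneg hx.1] at hx1
    subst hx1
    have : (t : ℝ) = s := by
      have : (1 : ℝ) ^ 3 - t * 1 ^ 2 + s * 1 - 1 = 0 := hfx
      linarith
    exact_mod_cast this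
  subst hts
  have hquad : ∀ x : ℝ, x ^ 2 - (t - 1) * x + 1 = 0 → |x| = 1 := by
    intro x hx
    apply habs
    linear_combination (x - 1) * hx
  have ht1 : t ≤ 3 := by
    by_contra! hlt
    have h4 : (4 : ℝ) ≤ t := by exact_mod_cast hlt
    have hs := Real.sq_sqrt (show (0 : ℝ) ≤ (t - 1) ^ 2 - 4 by nlinarith)
    have h0 := Real.sqrt_nonneg ((t - 1 : ℝ) ^ 2 - 4)
    have := hquad ((t - 1 + √((t - 1 : ℝ) ^ 2 - 4)) / 2) (by linear_combination hs / 4)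
    rw [abs_of_nonneg (by linarith)] at this
    linarith
  have ht2 : -1 ≤ t := by
    by_contra! hlt
    have h4 : (t : ℝ) ≤ -2 := by exact_mod_cast (by omega : t ≤ -2)
    have hs := Real.sq_sqrt (show (0 : ℝ) ≤ (t - 1) ^ 2 - 4 by nlinarith)
    have h0 := Real.sqrt_nonneg ((t - 1 : ℝ) ^ 2 - 4)
    have := hquad ((t - 1 - √((t - 1 : ℝ) ^ 2 - 4)) / 2) (by linear_combination hs / 4)
    rw [abs_of_nonpos (by linarith)] at this
    linarith
  have hpoly : ∀ p q : Polynomial ℤ, p = q * (Polynomial.X ^ 3 - Polynomial.C t * Polynomial.X ^ 2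
      + Polynomial.C t * Polynomial.X - 1) → Polynomial.aeval A p = 0 := by
    intro p q hpq
    rw [hpq, map_mul]
    convert mul_zero _
    simp only [map_sub, map_add, map_mul, map_pow, Polynomial.aeval_X, Polynomial.aeval_C,
      ← Algebra.smul_def, map_one]
    rw [pow_succ, pow_two, hch]
    abel
  interval_cases t
  · left
    have h := hpoly ((Polynomial.X * Polynomial.X - 1) * (Polynomial.X * Polynomial.X - 1)
      * (Polynomial.X * Polynomial.X - 1))
      ((Polynomial.X - 1) * (Polynomial.X * Polynomial.X - 1)) (by simp; ring)
    simp only [map_sub, map_mul, Polynomial.aeval_X, map_one] at h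
    have h2 : A * A = 1 := by
      refine aux_unip (A * A) n hn.ne' ?_ h
      rw [← pow_two, ← pow_mul, mul_comm, pow_mul, hMn, one_pow]
    rw [show 4 = 2 * 2 from rfl, pow_mul, pow_two A, h2, one_pow]
  · right
    have h := hpoly (Polynomial.X ^ 6 - 1) (Polynomial.X ^ 3 + 1) (by simp; ring)
    simpa [sub_eq_zero] using h
  · left
    have h := hpoly (Polynomial.X ^ 4 - 1) (Polynomial.X + 1) (by simp; ring)
    simpa [sub_eq_zero] using h
  · right
    have h := hpoly (Polynomial.X ^ 6 - 1) ((Polynomial.X + 1) * (Polynomial.X ^ 2 + Polynomial.X + 1))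
      (by simp; ring)
    simpa [sub_eq_zero] using h
  · left
    have h := hpoly ((Polynomial.X - 1) * (Polynomial.X - 1) * (Polynomial.X - 1)) 1
      (by simp; ring)
    simp only [map_sub, map_mul, Polynomial.aeval_X, map_one] at h
    rw [aux_unip A n hn.ne' hMn h, one_pow]
end

section
/- For every nontrivial finite subgroup H of SL(2,ℤ) there exist a matrix P ∈ GL(2,ℤ) and one of the four matrices M₂ = [[-1,0],[0,-1]], M₃ = [[0,-1],[1,-1]], M₄ = [[0,-1],[1,0]], M₆ = [[0,-1],[1,1]] such that H = P·⟨Mₖ⟩·P⁻¹, where ⟨Mₖ⟩ denotes the cyclic subgroup generated by Mₖ. In particular every nontrivial finite subgroup of SL(2,ℤ) is cyclic of order 2, 3, 4, or 6. -/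
/-- The matrix `[[-1,0],[0,-1]]` as an element of `SL(2,ℤ)`. -/
def KummerM2 : Matrix.SpecialLinearGroup (Fin 2) ℤ :=
  ⟨!![-1, 0; 0, -1], by norm_num [Matrix.det_fin_two_of]⟩

/-- The matrix `[[0,-1],[1,-1]]` as an element of `SL(2,ℤ)`. -/
def KummerM3 : Matrix.SpecialLinearGroup (Fin 2) ℤ :=
  ⟨!![0, -1; 1, -1], by norm_num [Matrix.det_fin_two_of]⟩

/-- The matrix `[[0,-1],[1,0]]` as an element of `SL(2,ℤ)`. -/
def KummerM4 : Matrix.SpecialLinearGroup (Fin 2) ℤ :=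
  ⟨!![0, -1; 1, 0], by norm_num [Matrix.det_fin_two_of]⟩

/-- The matrix `[[0,-1],[1,1]]` as an element of `SL(2,ℤ)`. -/
def KummerM6 : Matrix.SpecialLinearGroup (Fin 2) ℤ :=
  ⟨!![0, -1; 1, 1], by norm_num [Matrix.det_fin_two_of]⟩

open Matrix in
lemma aux_form (D : ℤ) (hD : D = -3 ∨ D = -4) : ∀ (n : ℕ) (A B C : ℤ), A.natAbs = n →
    B ^ 2 - 4 * A * C = D → ∃ x y : ℤ, IsUnit (A * x ^ 2 + B * x * y + C * y ^ 2) := by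
  intro n
  induction n using Nat.strong_induction_on with
  | _ n ih =>
    intro A B C hn hdisc
    have hA : A ≠ 0 := by
      rintro rfl
      rcases hD with h | h <;> nlinarith [sq_nonneg B]
    -- reduce B modulo 2A
    obtain ⟨k, hk⟩ : ∃ k : ℤ, |B + 2 * A * k| ≤ |A| := by
      have h2 : (0 : ℤ) < 2 * |A| := by positivity
      have e1 := Int.emod_add_mul_ediv (B + |A|) (2 * |A|)
      have e2 := Int.emod_nonneg (B + |A|) h2.ne'
      have e3 := Int.emod_lt_of_pos (B + |A|) h2
      rcases abs_cases A with ⟨h, _⟩ | ⟨h, _⟩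
      · refine ⟨-((B + |A|) / (2 * |A|)), ?_⟩
        rw [h] at e1 e2 e3 ⊢
        generalize hm : (B + _) / _ = m at *
        generalize (B + _) % _ = l at *
        rw [abs_le]
        constructor <;> nlinarith
      · refine ⟨((B + |A|) / (2 * |A|)), ?_⟩
        rw [h] at e1 e2 e3 ⊢
        generalize hm : (B + _) / _ = m at *
        generalize (B + _) % _ = l at *
        rw [abs_le]
        constructor <;> nlinarith
    set B' := B + 2 * A * k with hB'
    set C' := A * k ^ 2 + B * k + C with hC'
    have hdisc' : B' ^ 2 - 4 * A * C' = D := by rw [← hdisc, hB', hC']; ring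
    by_cases hlt : C'.natAbs < n
    · obtain ⟨x, y, h⟩ := ih _ hlt C' B' A rfl (by rw [← hdisc']; ring)
      refine ⟨y + k * x, x, ?_⟩
      convert h using 1
      rw [hB', hC']; ring
    · refine ⟨1, 0, ?_⟩
      have hle : |A| ≤ |C'| := by
        have : A.natAbs ≤ C'.natAbs := by omega
        rw [Int.abs_eq_natAbs, Int.abs_eq_natAbs]; exact_mod_cast this
      have hb : B' ^ 2 ≤ A ^ 2 := sq_le_sq.2 hk
      have hAC : 0 < A * C' := by
        rcases hD with h | h <;> nlinarith [sq_nonneg B']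
      have h1 : A ^ 2 ≤ A * C' := by
        rw [← abs_of_pos hAC, abs_mul, ← sq_abs, sq]
        exact mul_le_mul_of_nonneg_left hle (abs_nonneg _)
      have h2 : A ^ 2 ≤ 1 := by rcases hD with h | h <;> nlinarith
      have h3 : -1 ≤ A := by nlinarith
      have h4 : A ≤ 1 := by nlinarith
      rw [Int.isUnit_iff]
      have : A = 1 ∨ A = -1 := by omega
      simpa using this

lemma aux_Q (H : Subgroup (Matrix.SpecialLinearGroup (Fin 2) ℤ)) (hfin : Finite H) :
    ∃ p q r : ℤ, 0 < r ∧ q ^ 2 < p * r ∧ ∀ g ∈ H,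
      g 1 0 * p = - r * g 0 1 ∧ (g 1 1 - g 0 0) * r = - 2 * q * g 1 0 ∧
      (g 1 1 - g 0 0) * p = 2 * q * g 0 1 := by
  classical
  have := Fintype.ofFinite H
  let N : Matrix (Fin 2) (Fin 2) ℤ := ∑ h : H, (h.1.1 * h.1.1.transpose)
  have hp : N 0 0 = ∑ h : H, ((h.1 0 0) ^ 2 + (h.1 0 1) ^ 2) := by
    simp only [N, Matrix.sum_apply, Matrix.mul_apply, Fin.sum_univ_two, Matrix.transpose_apply]
    exact Finset.sum_congr rfl fun h _ => by ring
  have hq : N 0 1 = ∑ h : H, ((h.1 0 0) * (h.1 1 0) + (h.1 0 1) * (h.1 1 1)) := by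
    simp only [N, Matrix.sum_apply, Matrix.mul_apply, Fin.sum_univ_two, Matrix.transpose_apply]
  have hq' : N 1 0 = N 0 1 := by
    simp only [N, Matrix.sum_apply, Matrix.mul_apply, Fin.sum_univ_two, Matrix.transpose_apply]
    exact Finset.sum_congr rfl fun h _ => by ring
  have hr : N 1 1 = ∑ h : H, ((h.1 1 0) ^ 2 + (h.1 1 1) ^ 2) := by
    simp only [N, Matrix.sum_apply, Matrix.mul_apply, Fin.sum_univ_two, Matrix.transpose_apply]
    exact Finset.sum_congr rfl fun h _ => by ring
  have hpos : ∀ x y : ℤ, x ^ 2 + y ^ 2 ≤ N 0 0 * x ^ 2 + 2 * N 0 1 * x * y + N 1 1 * y ^ 2 := by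
    intro x y
    have : N 0 0 * x ^ 2 + 2 * N 0 1 * x * y + N 1 1 * y ^ 2 =
        ∑ h : H, ((h.1 0 0 * x + h.1 1 0 * y) ^ 2 + (h.1 0 1 * x + h.1 1 1 * y) ^ 2) := by
      rw [hp, hq, hr, Finset.sum_mul, Finset.mul_sum, Finset.sum_mul, Finset.sum_mul,
        Finset.sum_mul, ← Finset.sum_add_distrib, ← Finset.sum_add_distrib]
      exact Finset.sum_congr rfl fun h _ => by ring
    rw [this]
    refine le_trans ?_ (Finset.single_le_sum (f := fun h : H =>
      ((h.1 0 0 * x + h.1 1 0 * y) ^ 2 + (h.1 0 1 * x + h.1 1 1 * y) ^ 2))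
      (fun h _ => by positivity) (Finset.mem_univ (1 : H)))
    simp
  have hr0 : 0 < N 1 1 := by have := hpos 0 1; norm_num at this; omega
  refine ⟨N 0 0, N 0 1, N 1 1, hr0, ?_, ?_⟩
  · have := hpos (N 1 1) (- N 0 1)
    nlinarith [sq_nonneg (N 0 1)]
  · intro g hg
    have hinv : g.1 * N * g.1.transpose = N := by
      simp only [N, Finset.mul_sum, Finset.sum_mul]
      refine Fintype.sum_equiv (Equiv.mulLeft (⟨g, hg⟩ : H)) _ _ fun h => ?_
      simp [Matrix.mul_assoc]
    have hdet := g.2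
    rw [Matrix.det_fin_two] at hdet
    have e00 := congrFun (congrFun hinv 0) 0
    have e01 := congrFun (congrFun hinv 0) 1
    have e11 := congrFun (congrFun hinv 1) 1
    simp only [Matrix.mul_apply, Fin.sum_univ_two, Matrix.transpose_apply, hq'] at e00 e01 e11
    change g 1 0 * _ = - _ * g 0 1 ∧ _
    change g 0 0 * g 1 1 - g 0 1 * g 1 0 = 1 at hdet
    change (g 0 0 * _ + g 0 1 * _) * g 0 0 + (g 0 0 * _ + g 0 1 * _) * g 0 1 = _ at e00
    change (g 0 0 * _ + g 0 1 * _) * g 1 0 + (g 0 0 * _ + g 0 1 * _) * g 1 1 = _ at e01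
    change (g 1 0 * _ + g 1 1 * _) * g 1 0 + (g 1 0 * _ + g 1 1 * _) * g 1 1 = _ at e11
    generalize g 0 0 = a at *
    generalize g 0 1 = b at *
    generalize g 1 0 = c at *
    generalize g 1 1 = d at *
    generalize N 0 0 = p at *
    generalize N 0 1 = q at *
    generalize N 1 1 = r at *
    refine ⟨?_, ?_, ?_⟩
    · linear_combination (-c) * e00 + a * e01 - (a * q + b * r) * hdet
    · linear_combination (-c) * e01 + a * e11 - (c * q + d * r) * hdet
    · linear_combination (-d) * e00 + b * e01 + (a * p + b * q) * hdet

lemma aux_cyclic (H : Subgroup (Matrix.SpecialLinearGroup (Fin 2) ℤ)) (hfin : Finite H)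
    (p q r : ℤ) (hr : 0 < r) (hd : q ^ 2 < p * r) (h : ∀ g ∈ H,
      g 1 0 * p = - r * g 0 1 ∧ (g 1 1 - g 0 0) * r = - 2 * q * g 1 0 ∧
      (g 1 1 - g 0 0) * p = 2 * q * g 0 1) : IsCyclic H := by
  let s : ℝ := Real.sqrt ((p * r - q ^ 2 : ℤ) : ℝ)
  have hs : 0 < s := Real.sqrt_pos.2 (by exact_mod_cast sub_pos.2 hd)
  have hs2 : s ^ 2 = ((p * r - q ^ 2 : ℤ) : ℝ) :=
    Real.sq_sqrt (by exact_mod_cast (sub_pos.2 hd).le)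
  have hs2' : (s : ℂ) ^ 2 = p * r - q ^ 2 := by
    rw [← Complex.ofReal_pow, hs2]; push_cast; ring
  have hrC : (r : ℂ) ≠ 0 := by exact_mod_cast hr.ne'
  -- work with σ = r τ
  let τ : ℂ := (q + s * Complex.I) / r
  have hτ : (r : ℂ) * τ = q + s * Complex.I := by simp only [τ]; field_simp
  have hτ2 : (r : ℂ) * τ ^ 2 - 2 * q * τ + p = 0 := by
    apply mul_left_cancel₀ hrC
    have : (r * τ - q) ^ 2 = - (s : ℂ) ^ 2 := by
      rw [hτ]; linear_combination (s : ℂ) ^ 2 * Complex.I_sq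
    rw [hs2'] at this
    linear_combination this
  have hfix : ∀ g ∈ H, (g 0 0 : ℂ) * τ + g 0 1 = τ * (g 1 0 * τ + g 1 1) := by
    intro g hg
    obtain ⟨h1, h2, -⟩ := h g hg
    have h1' : (g 1 0 : ℂ) * p = - r * g 0 1 := by exact_mod_cast h1
    have h2' : ((g 1 1 : ℂ) - g 0 0) * r = - 2 * q * g 1 0 := by exact_mod_cast h2
    apply mul_left_cancel₀ hrC
    linear_combination (-(g 1 0 : ℂ)) * hτ2 - τ * h2' + h1'
  let f : H →* ℂ :=
    { toFun := fun g => (g.1 1 0 : ℂ) * τ + g.1 1 1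
      map_one' := by simp
      map_mul' := by
        intro x y
        have := hfix y.1 y.2
        simp only [Subgroup.coe_mul, Matrix.SpecialLinearGroup.coe_mul, Matrix.mul_apply,
          Fin.sum_univ_two]
        push_cast
        linear_combination (x.1 1 0 : ℂ) * this }
  refine isCyclic_of_subgroup_isDomain f ((injective_iff_map_eq_one f).2 ?_)
  intro x hx
  have hx' : (x.1 1 0 : ℂ) * τ + x.1 1 1 = 1 := hx
  obtain ⟨h1, h2, -⟩ := h x.1 x.2
  have him : (x.1 1 0 : ℂ) * (q + s * Complex.I) + x.1 1 1 * r = r := by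
    rw [← hτ]; linear_combination (r : ℂ) * hx'
  have hi := congrArg Complex.im him
  simp at hi
  have hc : x.1 1 0 = 0 := by
    rcases hi with hi | hi
    · exact_mod_cast hi
    · exact absurd hi hs.ne'
  have hd1 : x.1 1 1 = 1 := by rw [hc] at hx'; simp at hx'; exact_mod_cast hx'
  rw [hc] at h1 h2
  have hb : x.1 0 1 = 0 := by
    have : r * x.1 0 1 = 0 := by linarith
    exact (mul_eq_zero.1 this).resolve_left hr.ne'
  have ha : x.1 0 0 = 1 := by
    have : (x.1 1 1 - x.1 0 0) * r = 0 := by linarith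
    have := (mul_eq_zero.1 this).resolve_right hr.ne'
    omega
  apply Subtype.ext
  ext i j
  fin_cases i <;> fin_cases j <;> simp [ha, hb, hc, hd1]

lemma aux_conj (g M : Matrix.SpecialLinearGroup (Fin 2) ℤ) (t : ℤ)
    (hM : M.1 = !![0, -1; 1, t]) (ht : g 0 0 + g 1 1 = t) (htt : t = 0 ∨ t = 1 ∨ t = -1) :
    ∃ P : Matrix.GeneralLinearGroup (Fin 2) ℤ,
      g.1 * (P : Matrix (Fin 2) (Fin 2) ℤ) = (P : Matrix (Fin 2) (Fin 2) ℤ) * M.1 := by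
  have hdet := g.2
  rw [Matrix.det_fin_two] at hdet
  change g 0 0 * g 1 1 - g 0 1 * g 1 0 = 1 at hdet
  obtain ⟨x, y, hxy⟩ := aux_form (t ^ 2 - 4) (by rcases htt with h | h | h <;> simp [h]) _
    (g 1 0) (g 1 1 - g 0 0) (- g 0 1) rfl (by rw [← ht]; linear_combination (-4) * hdet)
  let N : Matrix (Fin 2) (Fin 2) ℤ :=
    !![x, g 0 0 * x + g 0 1 * y; y, g 1 0 * x + g 1 1 * y]
  have hN : IsUnit N.det := by
    convert hxy using 1
    simp only [N, Matrix.det_fin_two_of]; ring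
  refine ⟨Matrix.GeneralLinearGroup.mk'' N hN, ?_⟩
  change g.1 * N = N * M.1
  rw [hM]
  have hg : g.1 = !![g 0 0, g 0 1; g 1 0, g 1 1] := Matrix.eta_fin_two _
  rw [hg]
  simp only [N, Matrix.mul_fin_two]
  subst ht
  ext i j
  fin_cases i <;> fin_cases j <;> simp
  · linear_combination (-x) * hdet
  · linear_combination (-y) * hdet

lemma aux_final (H : Subgroup (Matrix.SpecialLinearGroup (Fin 2) ℤ))
    (g M : Matrix.SpecialLinearGroup (Fin 2) ℤ) (hH : ∀ x, x ∈ H ↔ ∃ n : ℤ, g ^ n = x)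
    (P : Matrix.GeneralLinearGroup (Fin 2) ℤ)
    (hP : g.1 * (P : Matrix (Fin 2) (Fin 2) ℤ) = (P : Matrix (Fin 2) (Fin 2) ℤ) * M.1) :
    (∀ x : Matrix.SpecialLinearGroup (Fin 2) ℤ,
        x ∈ H ↔ ∃ n : ℤ,
          (x : Matrix (Fin 2) (Fin 2) ℤ) =
            (P : Matrix (Fin 2) (Fin 2) ℤ) * ((M ^ n : Matrix.SpecialLinearGroup (Fin 2) ℤ) :
              Matrix (Fin 2) (Fin 2) ℤ) * ((P⁻¹ : Matrix.GeneralLinearGroup (Fin 2) ℤ) :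
              Matrix (Fin 2) (Fin 2) ℤ)) ∧ Nat.card H = orderOf M := by
  let ι : Matrix.SpecialLinearGroup (Fin 2) ℤ →* Matrix.GeneralLinearGroup (Fin 2) ℤ :=
    Matrix.SpecialLinearGroup.toGL
  have hι : ∀ x, ((ι x : Matrix.GeneralLinearGroup (Fin 2) ℤ) : Matrix (Fin 2) (Fin 2) ℤ) = x.1 :=
    fun x => rfl
  have hinj : Function.Injective ι := by
    intro x y h
    apply Subtype.ext
    rw [← hι x, ← hι y, h]
  have hc : ι g = P * ι M * P⁻¹ := by
    rw [eq_mul_inv_iff_mul_eq]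
    exact Units.ext hP
  have hcn : ∀ n : ℤ, ι (g ^ n) = P * ι (M ^ n) * P⁻¹ := by
    intro n
    rw [map_zpow, hc, conj_zpow, map_zpow]
  constructor
  · intro x
    rw [hH]
    refine exists_congr fun n => ?_
    have : (g ^ n = x) ↔ ι x = P * ι (M ^ n) * P⁻¹ := by
      rw [← hcn, hinj.eq_iff, eq_comm]
    rw [this, Units.ext_iff]
    rfl
  · have : H = Subgroup.zpowers g := by
      ext x; rw [hH, Subgroup.mem_zpowers_iff]
    rw [this, Nat.card_zpowers, ← orderOf_injective ι hinj, ← orderOf_injective ι hinj M, hc]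
    exact (MulAut.conj P).orderOf_eq (ι M)

/-- For every nontrivial finite subgroup `H` of `SL(2,ℤ)` there exist `P ∈ GL(2,ℤ)` and
one of the four matrices `M₂, M₃, M₄, M₆` such that `H = P·⟨Mₖ⟩·P⁻¹`; in particular
every nontrivial finite subgroup of `SL(2,ℤ)` is cyclic of order `2, 3, 4`, or `6`. -/
theorem stmt5 (H : Subgroup (Matrix.SpecialLinearGroup (Fin 2) ℤ))
    (hfin : Finite H) (hnt : H ≠ ⊥) :
    (∃ (P : Matrix.GeneralLinearGroup (Fin 2) ℤ)
       (M : Matrix.SpecialLinearGroup (Fin 2) ℤ),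
      M ∈ ({KummerM2, KummerM3, KummerM4, KummerM6} :
        Set (Matrix.SpecialLinearGroup (Fin 2) ℤ)) ∧
      ∀ g : Matrix.SpecialLinearGroup (Fin 2) ℤ,
        g ∈ H ↔ ∃ n : ℤ,
          (g : Matrix (Fin 2) (Fin 2) ℤ) =
            (P : Matrix (Fin 2) (Fin 2) ℤ) * ((M ^ n : Matrix.SpecialLinearGroup (Fin 2) ℤ) :
              Matrix (Fin 2) (Fin 2) ℤ) * ((P⁻¹ : Matrix.GeneralLinearGroup (Fin 2) ℤ) :
              Matrix (Fin 2) (Fin 2) ℤ)) ∧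
    IsCyclic H ∧ Nat.card H ∈ ({2, 3, 4, 6} : Set ℕ) := by
  obtain ⟨p, q, r, hr, hd, hQ⟩ := aux_Q H hfin
  have hcyc := aux_cyclic H hfin p q r hr hd hQ
  obtain ⟨⟨g, hgH⟩, hg⟩ := hcyc.exists_generator
  have hH : ∀ x, x ∈ H ↔ ∃ n : ℤ, g ^ n = x := by
    intro x
    constructor
    · intro hx
      obtain ⟨n, hn⟩ := Subgroup.mem_zpowers_iff.1 (hg ⟨x, hx⟩)
      exact ⟨n, by simpa using congrArg Subtype.val hn⟩
    · rintro ⟨n, rfl⟩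
      exact H.zpow_mem hgH n
  have hg1 : g ≠ 1 := by
    rintro rfl
    apply hnt
    rw [Subgroup.eq_bot_iff_forall]
    intro x hx
    obtain ⟨n, hn⟩ := (hH x).1 hx
    simpa using hn.symm
  have key : ∃ (P : Matrix.GeneralLinearGroup (Fin 2) ℤ)
      (M : Matrix.SpecialLinearGroup (Fin 2) ℤ),
      (M ∈ ({KummerM2, KummerM3, KummerM4, KummerM6} :
        Set (Matrix.SpecialLinearGroup (Fin 2) ℤ))) ∧
      g.1 * (P : Matrix (Fin 2) (Fin 2) ℤ) = (P : Matrix (Fin 2) (Fin 2) ℤ) * M.1 := by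
    obtain ⟨h1, h2, h3⟩ := hQ g hgH
    have hdet := g.2
    rw [Matrix.det_fin_two] at hdet
    change g 0 0 * g 1 1 - g 0 1 * g 1 0 = 1 at hdet
    by_cases hc : g 1 0 = 0
    · have hb : g 0 1 = 0 := by
        have : r * g 0 1 = 0 := by rw [hc] at h1; linarith
        exact (mul_eq_zero.1 this).resolve_left hr.ne'
      have hda : g 1 1 = g 0 0 := by
        have : (g 1 1 - g 0 0) * r = 0 := by rw [hc] at h2; linarith
        have := (mul_eq_zero.1 this).resolve_right hr.ne'
        omega
      have ha : g 0 0 = 1 ∨ g 0 0 = -1 := by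
        rw [hda, hc] at hdet
        exact mul_self_eq_one_iff.1 (by linarith)
      have ha' : g 0 0 = -1 := by
        refine ha.resolve_left fun h => hg1 ?_
        ext i j
        fin_cases i <;> fin_cases j <;> simp [h, hb, hc, hda]
      refine ⟨1, KummerM2, by simp, ?_⟩
      have : g.1 = !![g 0 0, g 0 1; g 1 0, g 1 1] := Matrix.eta_fin_two _
      rw [this, hda, ha', hb, hc]
      simp [KummerM2]
    · have ht : (g 0 0 + g 1 1) ^ 2 < 4 := by
        have e : r ^ 2 * ((g 0 0 + g 1 1) ^ 2 - 4) = 4 * (g 1 0) ^ 2 * (q ^ 2 - p * r) := by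
          linear_combination (4 * r ^ 2) * hdet + ((g 1 1 - g 0 0) * r - 2 * q * g 1 0) * h2
            + (4 * r * g 1 0) * h1
        have hc2 : 0 < (g 1 0) ^ 2 := by positivity
        have : r ^ 2 * ((g 0 0 + g 1 1) ^ 2 - 4) < 0 := by rw [e]; nlinarith
        by_contra hcon
        have : 0 ≤ r ^ 2 * ((g 0 0 + g 1 1) ^ 2 - 4) :=
          mul_nonneg (by positivity) (by linarith)
        linarith
      have ht1 : g 0 0 + g 1 1 < 2 := by nlinarith
      have ht2 : -2 < g 0 0 + g 1 1 := by nlinarith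
      obtain h | h | h : g 0 0 + g 1 1 = 0 ∨ g 0 0 + g 1 1 = 1 ∨ g 0 0 + g 1 1 = -1 := by omega
      · obtain ⟨P, hP⟩ := aux_conj g KummerM4 0 rfl h (by simp)
        exact ⟨P, KummerM4, by simp, hP⟩
      · obtain ⟨P, hP⟩ := aux_conj g KummerM6 1 rfl h (by simp)
        exact ⟨P, KummerM6, by simp, hP⟩
      · obtain ⟨P, hP⟩ := aux_conj g KummerM3 (-1) rfl h (by simp)
        exact ⟨P, KummerM3, by simp, hP⟩
  obtain ⟨P, M, hM, hP⟩ := key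
  obtain ⟨hf, hcard⟩ := aux_final H g M hH P hP
  refine ⟨⟨P, M, hM, hf⟩, hcyc, ?_⟩
  rw [hcard]
  simp only [Set.mem_insert_iff, Set.mem_singleton_iff] at hM ⊢
  rcases hM with rfl | rfl | rfl | rfl
  · left
    exact orderOf_eq_prime (p := 2) (by decide) (by decide)
  · right; left
    exact orderOf_eq_prime (p := 3) (by decide) (by decide)
  · right; right; left
    exact orderOf_eq_prime_pow (p := 2) (n := 1) (by decide) (by decide)
  · right; right; right
    rw [orderOf_eq_iff (by norm_num)]
    refine ⟨by decide, fun m h1 h2 => ?_⟩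
    interval_cases m <;> decide
end

section
/- Let a₁, …, a_l (l ≥ 1) be positive integers and let A = (ℝ/ℤ)⁴ be the real 4-dimensional torus with its structure of a topological abelian group. Then the closed subgroup K = {(x₁,…,x_l) ∈ A^l : a₁·x₁ + ⋯ + a_l·x_l = 0} has exactly g⁴ connected components, where g = gcd(a₁, …, a_l). -/
lemma aux_bezout {l : ℕ} (hl : 1 ≤ l) (a : Fin l → ℕ) :
    ∃ (b : Fin l → ℕ) (u : Fin l → ℤ), (∀ i, a i = Finset.univ.gcd a * b i) ∧
      ∑ i, u i * (b i : ℤ) = 1 := by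
  obtain ⟨b, hb, hg⟩ := Finset.extract_gcd (s := Finset.univ) a ⟨⟨0, hl⟩, Finset.mem_univ _⟩
  obtain ⟨u, hu⟩ := Finset.gcd_eq_sum_mul Finset.univ (fun i => (b i : ℤ))
  refine ⟨b, u, fun i => hb i (Finset.mem_univ _), ?_⟩
  have h1 : (Finset.univ.gcd (fun i => (b i : ℤ))).natAbs ∣ Finset.univ.gcd b := by
    refine Finset.dvd_gcd fun i _ => ?_
    have := Finset.gcd_dvd (f := fun i => (b i : ℤ)) (Finset.mem_univ i)
    simpa using Int.natAbs_dvd_natAbs.mpr this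
  rw [hg, Nat.dvd_one] at h1
  have h2 : Finset.univ.gcd (fun i => (b i : ℤ)) = 1 := by
    have h3 : normalize (Finset.univ.gcd (fun i => (b i : ℤ))) =
      Finset.univ.gcd (fun i => (b i : ℤ)) := Finset.normalize_gcd
    rw [← Int.abs_eq_normalize, Int.abs_eq_natAbs, h1] at h3
    simpa using h3.symm
  rw [← h2, hu]
  exact Finset.sum_congr rfl fun i _ => by ring

lemma aux_card1 (g : ℕ) (hg : 0 < g) :
    Nat.card {t : AddCircle (1 : ℝ) // g • t = 0} = g := by
  have : NeZero g := ⟨hg.ne'⟩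
  have hgR : (g : ℝ) ≠ 0 := by exact_mod_cast hg.ne'
  have key : ∀ z : ZMod g, g • (ZMod.toAddCircle z) = 0 := by
    intro z
    rw [← map_nsmul]; simp
  have : Function.Bijective (fun z : ZMod g =>
      (⟨ZMod.toAddCircle z, key z⟩ : {t : AddCircle (1 : ℝ) // g • t = 0})) := by
    constructor
    · intro x y h
      exact ZMod.toAddCircle_injective g (congrArg Subtype.val h)
    · rintro ⟨t, ht⟩
      obtain ⟨m, _, hm⟩ := (AddCircle.nsmul_eq_zero_iff hg).mp ht
      refine ⟨(m : ZMod g), Subtype.ext ?_⟩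
      simp only [ZMod.toAddCircle_natCast]
      rw [← hm]
      simp
  rw [← Nat.card_congr (Equiv.ofBijective _ this), Nat.card_zmod]

lemma aux_card4 (g : ℕ) (hg : 0 < g) :
    Nat.card {t : Fin 4 → AddCircle (1 : ℝ) // g • t = 0} = g ^ 4 := by
  let e : {t : Fin 4 → AddCircle (1 : ℝ) // g • t = 0} ≃
      (Fin 4 → {t : AddCircle (1 : ℝ) // g • t = 0}) :=
    { toFun := fun t i => ⟨t.1 i, congrFun t.2 i⟩
      invFun := fun s => ⟨fun i => (s i).1, funext fun i => (s i).2⟩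
      left_inv := fun _ => rfl
      right_inv := fun _ => rfl }
  rw [Nat.card_congr e, Nat.card_fun, aux_card1 g hg]
  simp

/-- Let `a₁, …, a_l` (`l ≥ 1`) be positive integers and `A = (ℝ/ℤ)⁴`. The closed subgroup
`K = {(x₁,…,x_l) ∈ A^l : a₁·x₁ + ⋯ + a_l·x_l = 0}` has exactly `g⁴` connected components,
where `g = gcd(a₁,…,a_l)`. -/
theorem stmt12 (l : ℕ) (hl : 1 ≤ l) (a : Fin l → ℕ) (ha : ∀ i, 0 < a i) :
    Nat.card (ConnectedComponents
      ↥{x : Fin l → (Fin 4 → AddCircle (1 : ℝ)) | ∑ i, a i • x i = 0}) =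
      (Finset.univ.gcd a) ^ 4 := by
  obtain ⟨b, u, hb, hu⟩ := aux_bezout hl a
  have hg : 0 < Finset.univ.gcd a := by
    rcases Nat.eq_zero_or_pos (Finset.univ.gcd a) with h | h
    · have h1 := hb ⟨0, hl⟩
      have h2 := ha ⟨0, hl⟩
      rw [h, zero_mul] at h1
      omega
    · exact h
  generalize Finset.univ.gcd a = g at hb hg
  rw [← aux_card4 g hg]
  have hsum : ∀ x : Fin l → (Fin 4 → AddCircle (1 : ℝ)),
      ∑ i, a i • x i = g • ∑ i, b i • x i := by
    intro x
    rw [Finset.smul_sum]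
    exact Finset.sum_congr rfl fun i _ => by rw [hb i, mul_smul]
  have hbu : ∀ t : Fin 4 → AddCircle (1 : ℝ), ∑ i, b i • (u i • t) = t := by
    intro t
    have : ∀ i, b i • (u i • t) = (u i * (b i : ℤ)) • t := by
      intro i
      rw [mul_comm, mul_smul, natCast_zsmul]
    simp_rw [this]
    rw [← Finset.sum_smul, hu, one_smul]
  have : Finite {t : Fin 4 → AddCircle (1 : ℝ) // g • t = 0} := by
    apply Nat.finite_of_card_ne_zero
    rw [aux_card4 g hg]
    positivity
  let f : ↥{x : Fin l → (Fin 4 → AddCircle (1 : ℝ)) | ∑ i, a i • x i = 0} →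
      {t : Fin 4 → AddCircle (1 : ℝ) // g • t = 0} :=
    fun x => ⟨∑ i, b i • x.1 i, by rw [← hsum]; exact x.2⟩
  have hf : Continuous f := by
    apply Continuous.subtype_mk
    have h0 : Continuous (fun x : Fin l → (Fin 4 → AddCircle (1 : ℝ)) => ∑ i, b i • x i) := by
      fun_prop
    exact h0.comp continuous_subtype_val
  -- retraction onto the fibre over `t`
  have hr : ∀ (t : {t : Fin 4 → AddCircle (1 : ℝ) // g • t = 0})
      (y : Fin l → (Fin 4 → AddCircle (1 : ℝ))),
      ∑ i, b i • (y i + u i • (t.1 - ∑ j, b j • y j)) = t.1 := by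
    intro t y
    simp_rw [smul_add]
    rw [Finset.sum_add_distrib, hbu]
    abel
  let r : {t : Fin 4 → AddCircle (1 : ℝ) // g • t = 0} →
      (Fin l → (Fin 4 → AddCircle (1 : ℝ))) →
      ↥{x : Fin l → (Fin 4 → AddCircle (1 : ℝ)) | ∑ i, a i • x i = 0} :=
    fun t y => ⟨fun i => y i + u i • (t.1 - ∑ j, b j • y j), by
      show ∑ i, a i • _ = _
      rw [hsum, hr, t.2]⟩
  have hrc : ∀ t, Continuous (r t) := by
    intro t
    apply Continuous.subtype_mk
    fun_prop
  have hrf : ∀ x, r (f x) x.1 = x := by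
    intro x
    apply Subtype.ext
    funext i
    simp [r, f]
  have hfr : ∀ t y, f (r t y) = t := fun t y => Subtype.ext (hr t y)
  apply Nat.card_congr
  refine Equiv.ofBijective hf.connectedComponentsLift ⟨?_, ?_⟩
  · intro p q
    obtain ⟨x, rfl⟩ := ConnectedComponents.surjective_coe p
    obtain ⟨y, rfl⟩ := ConnectedComponents.surjective_coe q
    intro h
    rw [hf.connectedComponentsLift_apply_coe, hf.connectedComponentsLift_apply_coe] at h
    rw [ConnectedComponents.coe_eq_coe']
    have hp : IsPreconnected (Set.range (r (f y))) := isPreconnected_range (hrc _)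
    exact hp.subset_connectedComponent ⟨y.1, hrf y⟩ ⟨x.1, by rw [← h]; exact hrf x⟩
  · intro t
    refine ⟨(r t 0 : _), ?_⟩
    rw [hf.connectedComponentsLift_apply_coe, hfr]
end

section
/- Every subgroup H of the binary tetrahedral group T whose order is different from 1 and from 3 contains the matrix −1 (the negative of the identity matrix). -/
/-- The matrix `I = [[i,0],[0,-i]]` as an element of `SL(2,ℂ)`. -/
def binTetraI : Matrix.SpecialLinearGroup (Fin 2) ℂ :=
  ⟨!![Complex.I, 0; 0, -Complex.I], by
    simp [Matrix.det_fin_two_of, Complex.I_mul_I]⟩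

/-- The matrix `τ = -(1/2)·[[1+i,-1+i],[1+i,1-i]]` as an element of `SL(2,ℂ)`. -/
noncomputable def binTetraTau : Matrix.SpecialLinearGroup (Fin 2) ℂ :=
  ⟨!![-(1 + Complex.I) / 2, -(-1 + Complex.I) / 2;
      -(1 + Complex.I) / 2, -(1 - Complex.I) / 2], by
    simp [Matrix.det_fin_two_of]
    ring_nf
    simp [Complex.I_sq]
    norm_num⟩

/-- The binary tetrahedral group `T`, the subgroup of `SL(2,ℂ)` generated by `I` and `τ`. -/
def binTetra : Subgroup (Matrix.SpecialLinearGroup (Fin 2) ℂ) :=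
  Subgroup.closure {binTetraI, binTetraTau}

def qList : List (ℤ × ℤ × ℤ × ℤ) :=
  [(2,0,0,0),(-2,0,0,0),(0,2,0,0),(0,-2,0,0),(0,0,2,0),(0,0,-2,0),(0,0,0,2),(0,0,0,-2)] ++
  ([1,-1].flatMap fun a => [1,-1].flatMap fun b => [1,-1].flatMap fun c => [1,-1].map fun d =>
    (a,b,c,d))

def qRaw (v w : ℤ × ℤ × ℤ × ℤ) : ℤ × ℤ × ℤ × ℤ :=
  (v.1*w.1 - v.2.1*w.2.1 - v.2.2.1*w.2.2.1 - v.2.2.2*w.2.2.2,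
   v.1*w.2.1 + v.2.1*w.1 + v.2.2.1*w.2.2.2 - v.2.2.2*w.2.2.1,
   v.1*w.2.2.1 - v.2.1*w.2.2.2 + v.2.2.1*w.1 + v.2.2.2*w.2.1,
   v.1*w.2.2.2 + v.2.1*w.2.2.1 + v.2.2.2*w.1 - v.2.2.1*w.2.1)

def qHalf (v : ℤ × ℤ × ℤ × ℤ) : ℤ × ℤ × ℤ × ℤ := (v.1/2, v.2.1/2, v.2.2.1/2, v.2.2.2/2)
def qDbl (v : ℤ × ℤ × ℤ × ℤ) : ℤ × ℤ × ℤ × ℤ := (2*v.1, 2*v.2.1, 2*v.2.2.1, 2*v.2.2.2)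
def qConj (v : ℤ × ℤ × ℤ × ℤ) : ℤ × ℤ × ℤ × ℤ := (v.1, -v.2.1, -v.2.2.1, -v.2.2.2)

theorem q_mul_closed : ∀ v ∈ qList, ∀ w ∈ qList,
    qHalf (qRaw v w) ∈ qList ∧ qRaw v w = qDbl (qHalf (qRaw v w)) := by
  decide +kernel

theorem q_conj_closed : ∀ v ∈ qList, qConj v ∈ qList := by
  decide +kernel

noncomputable def qMat (v : ℤ × ℤ × ℤ × ℤ) : Matrix (Fin 2) (Fin 2) ℂ :=
  !![((v.1:ℂ) + v.2.1 * Complex.I)/2, ((v.2.2.1:ℂ) + v.2.2.2 * Complex.I)/2;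
     (-(v.2.2.1:ℂ) + v.2.2.2 * Complex.I)/2, ((v.1:ℂ) - v.2.1 * Complex.I)/2]

theorem qMat_mul (v w u : ℤ × ℤ × ℤ × ℤ) (h : qRaw v w = qDbl u) :
    qMat v * qMat w = qMat u := by
  obtain ⟨a, b, c, d⟩ := v
  obtain ⟨a', b', c', d'⟩ := w
  obtain ⟨x, y, z, t⟩ := u
  simp only [qRaw, qDbl, Prod.mk.injEq] at h
  obtain ⟨h1, h2, h3, h4⟩ := h
  have h1 := congrArg (Int.cast : ℤ → ℂ) h1
  have h2 := congrArg (Int.cast : ℤ → ℂ) h2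
  have h3 := congrArg (Int.cast : ℤ → ℂ) h3
  have h4 := congrArg (Int.cast : ℤ → ℂ) h4
  push_cast at h1 h2 h3 h4
  have hI := Complex.I_mul_I
  ext p q
  fin_cases p <;> fin_cases q <;> simp [qMat, Matrix.mul_apply, Fin.sum_univ_two]
  · linear_combination h1/4 + Complex.I*h2/4 + (b*b'+d*d')/4*hI
  · linear_combination h3/4 + Complex.I*h4/4 + (b*d'-d*b')/4*hI
  · linear_combination -h3/4 + Complex.I*h4/4 + (d*b'-b*d')/4*hI
  · linear_combination h1/4 - Complex.I*h2/4 + (b*b'+d*d')/4*hI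

theorem mem_q (x : Matrix.SpecialLinearGroup (Fin 2) ℂ) (hx : x ∈ binTetra) :
    ∃ v ∈ qList, (x : Matrix (Fin 2) (Fin 2) ℂ) = qMat v := by
  unfold binTetra at hx
  induction hx using Subgroup.closure_induction with
  | mem x hx =>
    rcases hx with rfl | rfl
    · refine ⟨(0,2,0,0), by decide, ?_⟩
      ext p q
      fin_cases p <;> fin_cases q <;> simp [qMat, binTetraI] <;> ring
    · refine ⟨(-1,-1,1,-1), by decide, ?_⟩
      ext p q
      fin_cases p <;> fin_cases q <;> simp [qMat, binTetraTau] <;> ring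
  | one =>
    refine ⟨(2,0,0,0), by decide, ?_⟩
    ext p q
    fin_cases p <;> fin_cases q <;> simp [qMat]
  | mul x y _ _ hx hy =>
    obtain ⟨v, hv, hx⟩ := hx
    obtain ⟨w, hw, hy⟩ := hy
    obtain ⟨h1, h2⟩ := q_mul_closed v hv w hw
    exact ⟨_, h1, by rw [Matrix.SpecialLinearGroup.coe_mul, hx, hy, qMat_mul _ _ _ h2]⟩
  | inv x _ hx =>
    obtain ⟨v, hv, hx⟩ := hx
    refine ⟨_, q_conj_closed v hv, ?_⟩
    rw [Matrix.SpecialLinearGroup.coe_inv, hx, Matrix.adjugate_fin_two]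
    ext p q
    fin_cases p <;> fin_cases q <;> simp [qMat, qConj] <;> ring

theorem binTetra_fin : Finite binTetra ∧ Nat.card binTetra ≤ 24 := by
  choose f hf hf' using mem_q
  let g : binTetra → {v // v ∈ qList.toFinset} := fun x => ⟨f x.1 x.2, by simpa using hf x.1 x.2⟩
  have hg : Function.Injective g := by
    intro x y h
    have h : f x.1 x.2 = f y.1 y.2 := congrArg Subtype.val h
    apply Subtype.ext
    apply Subtype.ext
    rw [hf' x.1 x.2, hf' y.1 y.2, h]
  refine ⟨Finite.of_injective g hg, ?_⟩
  have := Nat.card_le_card_of_injective g hg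
  rw [Nat.card_eq_fintype_card (α := {v // v ∈ qList.toFinset}), Fintype.card_coe] at this
  exact this.trans (by decide +kernel)

theorem orderOf_I : orderOf binTetraI = 2 ^ (1 + 1) := by
  have hI := Complex.I_mul_I
  apply orderOf_eq_prime_pow
  · intro h
    have h := congrArg (fun x : Matrix.SpecialLinearGroup (Fin 2) ℂ =>
      (x : Matrix (Fin 2) (Fin 2) ℂ) 0 0) h
    simp only [Matrix.SpecialLinearGroup.coe_pow] at h
    simp [binTetraI, pow_two] at h
    norm_num [Complex.ext_iff] at h
  · apply Subtype.ext
    change ((binTetraI ^ 4 : Matrix.SpecialLinearGroup (Fin 2) ℂ) : Matrix (Fin 2) (Fin 2) ℂ) = 1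
    rw [Matrix.SpecialLinearGroup.coe_pow]
    simp [binTetraI, pow_succ, Matrix.one_fin_two]

theorem orderOf_Tau : orderOf binTetraTau = 3 := by
  have hI := Complex.I_mul_I
  apply orderOf_eq_prime
  · apply Subtype.ext
    change ((binTetraTau ^ 3 : Matrix.SpecialLinearGroup (Fin 2) ℂ) : Matrix (Fin 2) (Fin 2) ℂ) = 1
    rw [Matrix.SpecialLinearGroup.coe_pow]
    simp only [binTetraTau, pow_succ, pow_zero, one_mul, Matrix.mul_fin_two]
    generalize Complex.I = i at hI
    ext p q
    fin_cases p <;> fin_cases q <;> simp <;> grind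
  · intro h
    have h := congrArg (fun x : Matrix.SpecialLinearGroup (Fin 2) ℂ => x.1 0 1) h
    simp [binTetraTau, Complex.ext_iff] at h

theorem card_dvd : Nat.card binTetra ∣ 24 := by
  obtain ⟨hfin, hle⟩ := binTetra_fin
  have a : 4 ∣ Nat.card binTetra := by
    have := binTetra.orderOf_dvd_natCard (x := binTetraI) (Subgroup.subset_closure (by simp))
    rwa [orderOf_I] at this
  have b : 3 ∣ Nat.card binTetra := by
    have := binTetra.orderOf_dvd_natCard (x := binTetraTau) (Subgroup.subset_closure (by simp))
    rwa [orderOf_Tau] at this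
  have pos : 0 < Nat.card binTetra := Nat.card_pos
  generalize Nat.card binTetra = n at *
  interval_cases n <;> omega

theorem sq_one (x : Matrix.SpecialLinearGroup (Fin 2) ℂ) (h : x ^ 2 = 1) (hx : x ≠ 1) :
    (x : Matrix (Fin 2) (Fin 2) ℂ) = -1 := by
  have hinv : x⁻¹ = x := by
    rw [inv_eq_iff_mul_eq_one, ← pow_two, h]
  have hd := x.2
  have hm := congrArg Subtype.val hinv
  change (↑(x⁻¹) : Matrix (Fin 2) (Fin 2) ℂ) = x.1 at hm
  rw [Matrix.SpecialLinearGroup.coe_inv, Matrix.adjugate_fin_two] at hm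
  rw [Matrix.det_fin_two] at hd
  have e0 := congrFun (congrFun hm 0) 0
  have e1 := congrFun (congrFun hm 0) 1
  have e2 := congrFun (congrFun hm 1) 0
  simp at e0 e1 e2
  have z1 : x.1 0 1 = 0 := by grind
  have z2 : x.1 1 0 = 0 := by grind
  have hs : (x.1 0 0 - 1) * (x.1 0 0 + 1) = 0 := by grind
  rcases mul_eq_zero.1 hs with hs | hs
  · exfalso
    apply hx
    apply Subtype.ext
    ext p q
    fin_cases p <;> fin_cases q <;> simp <;> grind
  · ext p q
    fin_cases p <;> fin_cases q <;> simp <;> grind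

/-- Every subgroup `H` of the binary tetrahedral group `T` whose order is different
from 1 and from 3 contains the matrix `-1`. -/
theorem stmt14 (H : Subgroup (Matrix.SpecialLinearGroup (Fin 2) ℂ))
    (hle : H ≤ binTetra) (h1 : Nat.card H ≠ 1) (h3 : Nat.card H ≠ 3) :
    ∃ x ∈ H, (x : Matrix (Fin 2) (Fin 2) ℂ) = -1 := by
  have hd : Nat.card H ∣ 24 := (Subgroup.card_dvd_of_le hle).trans card_dvd
  have hev : 2 ∣ Nat.card H := by
    have hle' := Nat.le_of_dvd (by norm_num) hd
    generalize Nat.card H = n at *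
    interval_cases n <;> omega
  have : Finite H := Nat.finite_of_card_ne_zero (by
    intro h
    rw [h] at hd
    omega)
  obtain ⟨x, hx⟩ := exists_prime_orderOf_dvd_card' 2 hev
  have hx' : orderOf (x : Matrix.SpecialLinearGroup (Fin 2) ℂ) = 2 := by
    rw [Subgroup.orderOf_coe, hx]
  refine ⟨x, x.2, sq_one _ ?_ ?_⟩
  · exact orderOf_dvd_iff_pow_eq_one.1 hx'.dvd
  · intro h
    rw [h, orderOf_one] at hx'
    omega
end
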